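/- arXiv:2512.10109 — 9 statements merged into one kernel-verified Lean document; each statement's English description precedes it below -/
import Mathlib

section
/- The N-player Moroccan procurement game admits no Nash equilibrium in pure strategies: for every profile x = (x_1,…,x_N) ∈ [A,B]^N there exist a player i and a deviation x'_i ∈ [A,B] such that g_i(x'_i, x_{-i}) > g_i(x_i, x_{-i}). -/
/-!
If player `i` bids `t* = (∑_{j ≠ i} x_j + N E) / (2N - 1)`, the reference price becomes exactly `t*`,
so `i` is a winner; as an average of the other bids and of copies of `E`, this bid is feasible.
Hence a player who loses can always deviate to a positive payoff, and in an equilibrium everybody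
wins, which forces all bids to equal some `c`, with payoff `1/N < 1` each. If `c < E`, the bid `t*`
exceeds `c` and wins alone. If `c ≥ E`, the bid `A` pulls the reference price strictly below `c`
while staying below it, and again wins alone.
-/

open scoped BigOperators

/-- Reference price of a bid profile in the `N`-player Moroccan procurement game. -/
noncomputable def refPrice (N : ℕ) (E : ℝ) (x : Fin N → ℝ) : ℝ :=
  ((∑ i, x i) + N * E) / (2 * N)

open Classical in
/-- The set of winners: bidders with the largest bid `≤ P` if such a bid exists,
otherwise bidders with the smallest bid. -/
noncomputable def winners (N : ℕ) (E : ℝ) (x : Fin N → ℝ) : Set (Fin N) :=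
  if ∃ j, x j ≤ refPrice N E x then
    {i | x i ≤ refPrice N E x ∧ ∀ j, x j ≤ refPrice N E x → x j ≤ x i}
  else
    {i | ∀ j, x i ≤ x j}

open Classical in
/-- Payoff of player `i`: the prize `1` shared equally among the winners. -/
noncomputable def payoff (N : ℕ) (E : ℝ) (i : Fin N) (x : Fin N → ℝ) : ℝ :=
  if i ∈ winners N E x then 1 / ((winners N E x).ncard : ℝ) else 0

theorem refPrice_update (N : ℕ) (E : ℝ) (x : Fin N → ℝ) (i : Fin N) (t : ℝ) :
    refPrice N E (Function.update x i t) = refPrice N E x + (t - x i) / (2 * N) := by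
  have h1 := Finset.sum_update_of_mem (Finset.mem_univ i) x t
  have h2 := Finset.add_sum_erase Finset.univ x (Finset.mem_univ i)
  rw [Finset.sdiff_singleton_eq_erase] at h1
  unfold refPrice
  rw [h1, ← h2]
  ring

/-- Every player has a feasible bid that coincides with the reference price it induces. -/
theorem exists_fixed_bid {A E B : ℝ} (hAE : A < E) (hEB : E < B) {N : ℕ} (hN : 2 ≤ N)
    {x : Fin N → ℝ} (hx : ∀ i, x i ∈ Set.Icc A B) (i : Fin N) :
    ∃ t ∈ Set.Icc A B, refPrice N E (Function.update x i t) = t := by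
  have hN' : (2 : ℝ) ≤ N := by exact_mod_cast hN
  have hd : (0 : ℝ) < 2 * N - 1 := by linarith
  have h2 := Finset.add_sum_erase Finset.univ x (Finset.mem_univ i)
  have hcard : ((Finset.univ.erase i).card : ℝ) = N - 1 := by
    rw [Finset.card_erase_of_mem (Finset.mem_univ i), Finset.card_univ, Fintype.card_fin,
      Nat.cast_sub (by omega), Nat.cast_one]
  have hlo := Finset.card_nsmul_le_sum (Finset.univ.erase i) x A (fun j _ => (hx j).1)
  have hhi := Finset.sum_le_card_nsmul (Finset.univ.erase i) x B (fun j _ => (hx j).2)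
  rw [nsmul_eq_mul, hcard] at hlo hhi
  refine ⟨(∑ j ∈ Finset.univ.erase i, x j + N * E) / (2 * N - 1), ⟨?_, ?_⟩, ?_⟩
  · rw [le_div_iff₀ hd]
    nlinarith
  · rw [div_le_iff₀ hd]
    nlinarith
  · rw [refPrice_update]
    unfold refPrice
    have ht := div_mul_cancel₀ (∑ j ∈ Finset.univ.erase i, x j + N * E) hd.ne'
    rw [← h2, ← add_div, div_eq_iff (by linarith)]
    linarith

theorem mem_winners_of_eq_refPrice {N : ℕ} {E : ℝ} {y : Fin N → ℝ} {i : Fin N}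
    (h : refPrice N E y = y i) : i ∈ winners N E y := by
  unfold winners
  rw [if_pos ⟨i, h.ge⟩]
  exact ⟨h.ge, fun j hj => hj.trans h.le⟩

theorem payoff_pos {N : ℕ} {E : ℝ} {y : Fin N → ℝ} {i : Fin N}
    (h : i ∈ winners N E y) : 0 < payoff N E i y := by
  unfold payoff
  rw [if_pos h]
  have : 0 < (winners N E y).ncard := (Set.ncard_pos (Set.toFinite _)).2 ⟨i, h⟩
  positivity

/-- A bid not exceeding the reference price wins alone if every other bid is either smaller
or above the reference price. -/
theorem payoff_eq_one {N : ℕ} {E : ℝ} {y : Fin N → ℝ} {i : Fin N}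
    (hi : y i ≤ refPrice N E y) (h : ∀ j, j ≠ i → y j < y i ∨ refPrice N E y < y j) :
    payoff N E i y = 1 := by
  have hw : winners N E y = {i} := by
    unfold winners
    rw [if_pos ⟨i, hi⟩]
    ext j
    simp only [Set.mem_ofPred_eq, Set.mem_singleton_iff]
    constructor
    · rintro ⟨h1, h2⟩
      by_contra hj
      have := h2 i hi
      rcases h j hj with h' | h' <;> linarith
    · rintro rfl
      refine ⟨hi, fun k hk => ?_⟩
      by_cases hkj : k = j
      · rw [hkj]
      · rcases h k hkj with h' | h' <;> linarith
  simp [payoff, hw]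

theorem eq_of_mem_winners {N : ℕ} {E : ℝ} {x : Fin N → ℝ} {i j : Fin N}
    (hi : i ∈ winners N E x) (hj : j ∈ winners N E x) : x i = x j := by
  unfold winners at hi hj
  split_ifs at hi hj
  · exact le_antisymm (hj.2 i hi.1) (hi.2 j hj.1)
  · exact le_antisymm (hi j) (hj i)

/-- The `N`-player Moroccan procurement game admits no pure-strategy Nash equilibrium. -/
theorem no_pure_nash_equilibrium (A E B : ℝ) (hAE : A < E) (hEB : E < B)
    (N : ℕ) (hN : 2 ≤ N) (x : Fin N → ℝ) (hx : ∀ i, x i ∈ Set.Icc A B) :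
    ∃ i : Fin N, ∃ x' ∈ Set.Icc A B,
      payoff N E i (Function.update x i x') > payoff N E i x := by
  by_cases hall : ∀ i, i ∈ winners N E x
  · have hN' : (2 : ℝ) ≤ N := by exact_mod_cast hN
    let i : Fin N := ⟨0, by omega⟩
    have heq : ∀ j, x j = x i := fun j => eq_of_mem_winners (hall j) (hall i)
    have hpay : payoff N E i x < 1 := by
      have hw : winners N E x = Set.univ := Set.eq_univ_of_forall hall
      simp only [payoff, hw, Set.mem_univ, if_true, Set.ncard_univ, Nat.card_eq_fintype_card,
        Fintype.card_fin]
      rw [div_lt_one (by linarith)]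
      linarith
    have hP : refPrice N E x = (x i + E) / 2 := by
      unfold refPrice
      rw [Finset.sum_congr rfl (fun j _ => heq j)]
      simp only [Finset.sum_const, Finset.card_univ, Fintype.card_fin, nsmul_eq_mul]
      field_simp
    have hpos : (0 : ℝ) < 2 * N := by linarith
    -- It suffices to find a bid that wins alone against a unanimous bid of the others.
    suffices h : ∃ t ∈ Set.Icc A B, t ≤ refPrice N E (Function.update x i t) ∧
        (x i < t ∨ refPrice N E (Function.update x i t) < x i) by
      obtain ⟨t, ht, h1, h2⟩ := h
      refine ⟨i, t, ht, ?_⟩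
      rw [payoff_eq_one (by simpa using h1) fun j hj => ?_]
      · exact hpay
      · rw [Function.update_self, Function.update_of_ne hj, heq j]
        exact h2
    rcases lt_or_ge (x i) E with hc | hc
    · obtain ⟨t, ht, hfix⟩ := exists_fixed_bid hAE hEB hN hx i
      refine ⟨t, ht, hfix.ge, Or.inl ?_⟩
      rw [refPrice_update, hP] at hfix
      by_contra hle
      have : (t - x i) / (2 * N) ≥ t - x i := by
        rw [ge_iff_le, le_div_iff₀ hpos]
        nlinarith
      linarith
    · have hneg : (A - x i) / (2 * N) < 0 := div_neg_of_neg_of_pos (by linarith) hpos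
      have hge : (A - x i) / 2 ≤ (A - x i) / (2 * N) := by
        rw [le_div_iff₀ hpos]
        nlinarith
      refine ⟨A, ⟨le_rfl, by linarith⟩, ?_, Or.inr ?_⟩ <;> rw [refPrice_update, hP] <;> linarith
  · push Not at hall
    obtain ⟨i, hi⟩ := hall
    obtain ⟨t, ht, hfix⟩ := exists_fixed_bid hAE hEB hN hx i
    refine ⟨i, t, ht, ?_⟩
    have h0 : payoff N E i x = 0 := by simp [payoff, hi]
    rw [h0]
    exact payoff_pos (mem_winners_of_eq_refPrice (by simpa using hfix))
end

section
/- In the two-player Moroccan procurement game, for every Borel probability measure ν on [A,B] one has sup_{x ∈ [A,B]} ∫ g(x,y) dν(y) ≥ 1/2. -/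
/-!
The game is symmetric and constant-sum: `g2 E x y + g2 E y x = 1` for all bids. Hence, by Fubini, the
expected payoff of playing `ν` against itself is exactly `1/2`. This is the `ν`-average over `x` of
the expected payoff of the pure bid `x` against `ν`, and since `ν` is carried by `[A, B]`, this
average is at most the supremum of these payoffs over `x ∈ [A, B]`.
-/

open MeasureTheory

/-- Reference price in the two-player Moroccan procurement game. -/
noncomputable def P2 (E x y : ℝ) : ℝ := (x + y + 2 * E) / 4

/-- Player 1's payoff in the two-player Moroccan procurement game. -/
noncomputable def g2 (E x y : ℝ) : ℝ :=
  if (y < x ∧ x ≤ P2 E x y) ∨ (P2 E x y ≤ x ∧ x < y) ∨ (x ≤ P2 E x y ∧ P2 E x y < y) then 1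
  else if x = y then 1 / 2
  else 0

/-- When `x < y`, player 2 wins iff `y ≤ P2 E x y`, and player 1 wins otherwise. -/
theorem g2_add_swap (E x y : ℝ) : g2 E x y + g2 E y x = 1 := by
  unfold g2 P2
  rcases lt_trichotomy x y with h | h | h
  · grind
  · subst h
    norm_num
    grind
  · grind

theorem g2_nonneg (E x y : ℝ) : 0 ≤ g2 E x y := by
  unfold g2
  split_ifs <;> norm_num

theorem g2_le_one (E x y : ℝ) : g2 E x y ≤ 1 := by
  linarith [g2_add_swap E x y, g2_nonneg E y x]

theorem measurable_g2 (E : ℝ) : Measurable fun p : ℝ × ℝ => g2 E p.1 p.2 := by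
  have hP : Measurable fun p : ℝ × ℝ => P2 E p.1 p.2 := by
    unfold P2
    fun_prop
  unfold g2
  refine Measurable.ite ?_ measurable_const
    (Measurable.ite (measurableSet_eq_fun measurable_fst measurable_snd)
      measurable_const measurable_const)
  exact ((measurableSet_lt measurable_snd measurable_fst).inter
      (measurableSet_le measurable_fst hP)).union
    (((measurableSet_le hP measurable_fst).inter
      (measurableSet_lt measurable_fst measurable_snd)).union
    ((measurableSet_le measurable_fst hP).inter (measurableSet_lt hP measurable_snd)))

theorem integrable_g2_prod (E : ℝ) (ν : Measure ℝ) [IsProbabilityMeasure ν] :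
    Integrable (fun p : ℝ × ℝ => g2 E p.1 p.2) (ν.prod ν) :=
  Integrable.of_bound (measurable_g2 E).aestronglyMeasurable 1 <| .of_forall fun p => by
    rw [Real.norm_of_nonneg (g2_nonneg E p.1 p.2)]
    exact g2_le_one E p.1 p.2

theorem integral_integral_g2 (E : ℝ) (ν : Measure ℝ) [IsProbabilityMeasure ν] :
    ∫ x, ∫ y, g2 E x y ∂ν ∂ν = 1 / 2 := by
  have hi := integrable_g2_prod E ν
  have hswap : ∫ p : ℝ × ℝ, g2 E p.2 p.1 ∂(ν.prod ν) = ∫ p : ℝ × ℝ, g2 E p.1 p.2 ∂(ν.prod ν) :=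
    integral_prod_swap (μ := ν) (ν := ν) fun p : ℝ × ℝ => g2 E p.1 p.2
  have hsum : ∫ p : ℝ × ℝ, (g2 E p.1 p.2 + g2 E p.2 p.1) ∂(ν.prod ν) = 1 := by
    simp [g2_add_swap]
  have hi' : Integrable (fun p : ℝ × ℝ => g2 E p.2 p.1) (ν.prod ν) := hi.swap
  rw [integral_add hi hi', hswap] at hsum
  rw [← integral_prod _ hi]
  linarith

/-- Against any mixed strategy `ν` of player 2 on `[A,B]`, player 1 can guarantee
an expected payoff arbitrarily close to (at least) `1/2`. -/
theorem sup_expected_payoff_ge_half (A E B : ℝ) (hAE : A < E) (hEB : E < B)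
    (ν : Measure ℝ) [IsProbabilityMeasure ν] (hν : ν (Set.Icc A B)ᶜ = 0) :
    (1 : ℝ) / 2 ≤ ⨆ x : Set.Icc A B, ∫ y, g2 E (x : ℝ) y ∂ν := by
  have hbdd : BddAbove (Set.range fun x : Set.Icc A B => ∫ y, g2 E (x : ℝ) y ∂ν) := by
    refine ⟨1, ?_⟩
    rintro _ ⟨x, rfl⟩
    have h := integral_mono_of_nonneg (μ := ν) (.of_forall (g2_nonneg E x))
      (integrable_const (1 : ℝ)) (.of_forall (g2_le_one E x))
    simpa using h
  have hae : ∀ᵐ x ∂ν, ∫ y, g2 E x y ∂ν ≤ ⨆ x : Set.Icc A B, ∫ y, g2 E (x : ℝ) y ∂ν := by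
    have hmem : ∀ᵐ x ∂ν, x ∈ Set.Icc A B := hν
    filter_upwards [hmem] with x hx
    exact le_ciSup hbdd ⟨x, hx⟩
  have h := integral_mono_ae (integrable_g2_prod E ν).integral_prod_left (integrable_const _) hae
  rw [integral_integral_g2] at h
  simpa using h
end

section
/- Let μ* be the probability measure on [A,B] with Lebesgue density h(t) = 3/(4(E−A)) for t ∈ [A, A₁), h(t) = 9/(4(E−A)) for t ∈ [A₁, A₂), and h(t) = 0 otherwise. Then for every y ∈ [A,B], ∫ g(x,y) dμ*(x) ≥ 1/2, with equality ∫ g(x,y) dμ*(x) = 1/2 for y ∈ [A, A₂] and ∫ g(x,y) dμ*(x) = 1 for y ∈ [A₃, B]. -/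
/-!
The measure `μ*` is a sum of two multiples of Lebesgue measure, on `[A, A₁)` and on `[A₁, A₂)`
(`unifMeas_eq`), each piece of mass `1/2`. Since `x ≤ P(x,y)` iff `x ≤ (y+2E)/3` and `P(x,y) < y`
iff `x < 3y-2E`, a bid `x < E` with `x ≠ y` wins against `y < E` exactly when `x < 3y-2E` or
`y < x ≤ (y+2E)/3`, and it wins against `y ≥ E` exactly when `x < y`. On each of the two pieces the
winning bids therefore fill, up to endpoints, a single interval, and the expected payoff is a
combination of two lengths (`integral_unifMeas`):

* for `y ∈ [A, A₁]` the intervals are `(y, A₁)` and `(A₁, (y+2E)/3)`;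
* for `y ∈ [A₁, A₂]` they are `(A, 3y-2E)` and `(y, A₂)`;
* for `y ≥ A₂` they are `(A, A₁)` and `(A₁, min (3y-2E) A₂)`.

In the first two cases `t ↦ (t+2E)/3`, which maps `A ↦ A₁ ↦ A₂ ↦ A₃` and contracts lengths by
the factor `3`, is compensated by the ratio `3` of the densities, so the payoff is `1/2`. In the
third case the first piece alone gives `1/2`, and `3y-2E ≥ A₂` when `y ≥ A₃`.
-/

open MeasureTheory

/-- Density of the uniform-based equilibrium strategy:
`3/(4(E-A))` on `[a₁, a₂)`, `9/(4(E-A))` on `[a₂, a₃)` (here `a₁ = A`,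
`a₂ = A₁ = (A+2E)/3`, `a₃ = A₂ = (A+8E)/9`), and `0` elsewhere. -/
noncomputable def unifDens (A E a₁ a₂ : ℝ) (t : ℝ) : ℝ :=
  if t ∈ Set.Ico A a₁ then 3 / (4 * (E - A))
  else if t ∈ Set.Ico a₁ a₂ then 9 / (4 * (E - A))
  else 0

/-- The measure on `ℝ` with Lebesgue density `unifDens`. -/
noncomputable def unifMeas (A E a₁ a₂ : ℝ) : Measure ℝ :=
  volume.withDensity (fun t => ENNReal.ofReal (unifDens A E a₁ a₂ t))

lemma unifMeas_eq (A E a₁ a₂ : ℝ) :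
    unifMeas A E a₁ a₂ =
      ENNReal.ofReal (3 / (4 * (E - A))) • volume.restrict (Set.Ico A a₁) +
      ENNReal.ofReal (9 / (4 * (E - A))) • volume.restrict (Set.Ico a₁ a₂) := by
  have h : (fun t => ENNReal.ofReal (unifDens A E a₁ a₂ t)) =
      (Set.Ico A a₁).indicator (fun _ => ENNReal.ofReal (3 / (4 * (E - A)))) +
      (Set.Ico a₁ a₂).indicator (fun _ => ENNReal.ofReal (9 / (4 * (E - A)))) := by
    funext t
    by_cases h1 : t ∈ Set.Ico A a₁
    · have h2 : t ∉ Set.Ico a₁ a₂ := fun h => absurd h1.2 (not_lt.mpr h.1)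
      simp [unifDens, h1, h2, -Set.mem_Ico]
    · by_cases h2 : t ∈ Set.Ico a₁ a₂ <;> simp [unifDens, h1, h2, -Set.mem_Ico]
  rw [unifMeas, h, withDensity_add_left (measurable_const.indicator measurableSet_Ico),
    withDensity_indicator measurableSet_Ico, withDensity_indicator measurableSet_Ico,
    withDensity_const, withDensity_const]

/-- A function which is `1` on `(u, v)` and `0` on the rest of `(a, b)`, with arbitrary values at
the endpoints, has integral `v - u`. -/
lemma integral_of_step (f : ℝ → ℝ) (a b u v : ℝ) (hau : a ≤ u) (huv : u ≤ v) (hvb : v ≤ b)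
    (h0 : ∀ x, a < x → x < u → f x = 0) (h1 : ∀ x, u < x → x < v → f x = 1)
    (h2 : ∀ x, v < x → x < b → f x = 0) :
    IntegrableOn f (Set.Ico a b) ∧ ∫ x in Set.Ico a b, f x = v - u := by
  have hae : f =ᵐ[volume.restrict (Set.Ico a b)] (Set.Ioo u v).indicator (fun _ => (1 : ℝ)) := by
    have hne : ∀ c : ℝ, ∀ᵐ x ∂(volume.restrict (Set.Ico a b)), x ≠ c := fun c =>
      ae_restrict_of_ae (Measure.ae_ne volume c)
    filter_upwards [hne a, hne u, hne v, ae_restrict_mem measurableSet_Ico] with x ha hu hv hx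
    have hax : a < x := lt_of_le_of_ne hx.1 (Ne.symm ha)
    rcases lt_or_gt_of_ne hu with h | h
    · rw [h0 x hax h, Set.indicator_of_notMem (fun hm => absurd hm.1 (not_lt.mpr h.le))]
    · rcases lt_or_gt_of_ne hv with h' | h'
      · rw [h1 x h h', Set.indicator_of_mem (Set.mem_Ioo.mpr ⟨h, h'⟩)]
      · rw [h2 x h' hx.2, Set.indicator_of_notMem (fun hm => absurd hm.2 (not_lt.mpr h'.le))]
  constructor
  · have hi : Integrable ((Set.Ioo u v).indicator (fun _ => (1 : ℝ)))
        (volume.restrict (Set.Ico a b)) :=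
      (integrable_const (1 : ℝ)).indicator measurableSet_Ioo
    exact hi.congr hae.symm
  · have hsub : Set.Ioo u v ∩ Set.Ico a b = Set.Ioo u v :=
      Set.inter_eq_left.mpr fun x hx => ⟨hau.trans hx.1.le, hx.2.trans_le hvb⟩
    rw [integral_congr_ae hae, integral_indicator measurableSet_Ioo,
      Measure.restrict_restrict measurableSet_Ioo, hsub]
    simp [huv]

/-- The expected value under `unifMeas` of a function which, on each of the two pieces, is the
indicator of an interval up to endpoints. -/
lemma integral_unifMeas (f : ℝ → ℝ) (A E a₁ a₂ u v u' v' : ℝ) (hAE : A < E)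
    (hu : A ≤ u) (huv : u ≤ v) (hv : v ≤ a₁) (hu' : a₁ ≤ u') (huv' : u' ≤ v') (hv' : v' ≤ a₂)
    (h0 : ∀ x, A < x → x < u → f x = 0) (h1 : ∀ x, u < x → x < v → f x = 1)
    (h2 : ∀ x, v < x → x < a₁ → f x = 0)
    (h0' : ∀ x, a₁ < x → x < u' → f x = 0) (h1' : ∀ x, u' < x → x < v' → f x = 1)
    (h2' : ∀ x, v' < x → x < a₂ → f x = 0) :
    ∫ x, f x ∂(unifMeas A E a₁ a₂) = (3 * (v - u) + 9 * (v' - u')) / (4 * (E - A)) := by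
  obtain ⟨i1, e1⟩ := integral_of_step f A a₁ u v hu huv hv h0 h1 h2
  obtain ⟨i2, e2⟩ := integral_of_step f a₁ a₂ u' v' hu' huv' hv' h0' h1' h2'
  have hp : 0 < 4 * (E - A) := by linarith
  rw [unifMeas_eq, integral_add_measure (i1.smul_measure ENNReal.ofReal_ne_top)
    (i2.smul_measure ENNReal.ofReal_ne_top), integral_smul_measure, integral_smul_measure, e1, e2,
    ENNReal.toReal_ofReal (by positivity), ENNReal.toReal_ofReal (by positivity), smul_eq_mul,
    smul_eq_mul]
  ring

lemma g2_eq_one_of_lt (E x y : ℝ) (hx : x < E) (h : x < 3 * y - 2 * E) : g2 E x y = 1 := by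
  rw [g2, if_pos]
  unfold P2
  by_cases hxy : x ≤ (x + y + 2 * E) / 4
  · exact Or.inr (Or.inr ⟨hxy, by linarith⟩)
  · exact Or.inr (Or.inl ⟨by linarith, by linarith⟩)

lemma g2_eq_one_of_gt (E x y : ℝ) (h : y < x) (h' : 3 * x ≤ y + 2 * E) : g2 E x y = 1 := by
  rw [g2, if_pos]
  exact Or.inl ⟨h, by unfold P2; linarith⟩

lemma g2_eq_zero_of_lt (E x y : ℝ) (hy : y < E) (h : x < y) (h' : 3 * y - 2 * E ≤ x) :
    g2 E x y = 0 := by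
  rw [g2, if_neg, if_neg h.ne]
  unfold P2
  rintro (⟨h1, h2⟩ | ⟨h1, h2⟩ | ⟨h1, h2⟩) <;> linarith

lemma g2_eq_zero_of_gt (E x y : ℝ) (h : y < x) (h' : y + 2 * E < 3 * x) :
    g2 E x y = 0 := by
  rw [g2, if_neg, if_neg h.ne']
  unfold P2
  rintro (⟨h1, h2⟩ | ⟨h1, h2⟩ | ⟨h1, h2⟩) <;> linarith

/-- Against `y ≥ A₂`, every bid in `[A, A₁)` wins, and on `[A₁, A₂)` exactly the bids below
`3y - 2E` win. -/
lemma integral_g2_of_ge (A E y : ℝ) (hAE : A < E) (hy : (A + 8 * E) / 9 ≤ y) :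
    ∫ x, g2 E x y ∂(unifMeas A E ((A + 2 * E) / 3) ((A + 8 * E) / 9)) =
      1 / 2 + 9 * (min (3 * y - 2 * E) ((A + 8 * E) / 9) - (A + 2 * E) / 3) / (4 * (E - A)) := by
  have hp : E - A ≠ 0 := by linarith
  rw [integral_unifMeas (fun x => g2 E x y) A E _ _ A ((A + 2 * E) / 3) ((A + 2 * E) / 3)
    (min (3 * y - 2 * E) ((A + 8 * E) / 9)) hAE le_rfl (by linarith) le_rfl le_rfl
    (le_min (by linarith) (by linarith)) (min_le_right _ _)]
  · field_simp
    ring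
  · intro x h h'; linarith
  · intro x h h'; exact g2_eq_one_of_lt E x y (by linarith) (by linarith)
  · intro x h h'; linarith
  · intro x h h'; linarith
  · intro x h h'
    obtain ⟨h3, h4⟩ := lt_min_iff.mp h'
    exact g2_eq_one_of_lt E x y (by linarith) h3
  · intro x h h'
    rcases min_lt_iff.mp h with h | h
    · exact g2_eq_zero_of_lt E x y (by linarith) (by linarith) h.le
    · linarith

lemma integral_g2_of_le (A E y : ℝ) (hAE : A < E) (hA : A ≤ y) (hy : y ≤ (A + 8 * E) / 9) :
    ∫ x, g2 E x y ∂(unifMeas A E ((A + 2 * E) / 3) ((A + 8 * E) / 9)) = 1 / 2 := by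
  have hp : E - A ≠ 0 := by linarith
  rcases le_total y ((A + 2 * E) / 3) with h1 | h1
  · rw [integral_unifMeas (fun x => g2 E x y) A E _ _ y ((A + 2 * E) / 3) ((A + 2 * E) / 3)
      ((y + 2 * E) / 3) hAE hA h1 le_rfl le_rfl (by linarith) (by linarith)]
    · field_simp
      ring
    · intro x h h'; exact g2_eq_zero_of_lt E x y (by linarith) h' (by linarith)
    · intro x h h'; exact g2_eq_one_of_gt E x y h (by linarith)
    · intro x h h'; linarith
    · intro x h h'; linarith
    · intro x h h'; exact g2_eq_one_of_gt E x y (by linarith) (by linarith)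
    · intro x h h'; exact g2_eq_zero_of_gt E x y (by linarith) (by linarith)
  · rw [integral_unifMeas (fun x => g2 E x y) A E _ _ A (3 * y - 2 * E) y
      ((A + 8 * E) / 9) hAE le_rfl (by linarith) (by linarith) h1 hy le_rfl]
    · field_simp
      ring
    · intro x h h'; linarith
    · intro x h h'; exact g2_eq_one_of_lt E x y (by linarith) h'
    · intro x h h'; exact g2_eq_zero_of_lt E x y (by linarith) (by linarith) h.le
    · intro x h h'; exact g2_eq_zero_of_lt E x y (by linarith) h' (by linarith)
    · intro x h h'; exact g2_eq_one_of_gt E x y h (by linarith)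
    · intro x h h'; linarith

/-- Playing the mixed strategy `μ*` with density `3/(4(E-A))` on `[A, A₁)` and
`9/(4(E-A))` on `[A₁, A₂)`, player 1's expected payoff against any bid `y ∈ [A,B]`
of player 2 is at least `1/2`, with equality for `y ∈ [A, A₂]` and with expected
payoff `1` for `y ∈ [A₃, B]`. -/
theorem expected_payoff_of_muStar (A E B : ℝ) (hAE : A < E) (hEB : E < B)
    (A₁ A₂ A₃ : ℝ) (hA₁ : A₁ = (A + 2 * E) / 3) (hA₂ : A₂ = (A + 8 * E) / 9)
    (hA₃ : A₃ = (A + 26 * E) / 27) :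
    IsProbabilityMeasure (unifMeas A E A₁ A₂) ∧
    (∀ y ∈ Set.Icc A B, 1 / 2 ≤ ∫ x, g2 E x y ∂(unifMeas A E A₁ A₂)) ∧
    (∀ y ∈ Set.Icc A A₂, ∫ x, g2 E x y ∂(unifMeas A E A₁ A₂) = 1 / 2) ∧
    (∀ y ∈ Set.Icc A₃ B, ∫ x, g2 E x y ∂(unifMeas A E A₁ A₂) = 1) := by
  subst hA₁ hA₂ hA₃
  have hp : 0 < E - A := by linarith
  have hne : E - A ≠ 0 := hp.ne'
  refine ⟨⟨?_⟩, ?_, ?_, ?_⟩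
  · rw [unifMeas_eq]
    simp only [Measure.add_apply, Measure.smul_apply, Measure.restrict_apply_univ,
      Real.volume_Ico, smul_eq_mul]
    rw [← ENNReal.ofReal_mul (by positivity), ← ENNReal.ofReal_mul (by positivity),
      ← ENNReal.ofReal_add (mul_nonneg (by positivity) (by linarith))
        (mul_nonneg (by positivity) (by linarith)), ENNReal.ofReal_eq_one]
    field_simp
    ring
  · rintro y ⟨hy, -⟩
    rcases le_total y ((A + 8 * E) / 9) with h | h
    · exact (integral_g2_of_le A E y hAE hy h).ge
    · rw [integral_g2_of_ge A E y hAE h]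
      have hm : (A + 2 * E) / 3 ≤ min (3 * y - 2 * E) ((A + 8 * E) / 9) :=
        le_min (by linarith) (by linarith)
      have := div_nonneg (mul_nonneg (by norm_num : (0 : ℝ) ≤ 9) (sub_nonneg.mpr hm))
        (by positivity : 0 ≤ 4 * (E - A))
      linarith
  · rintro y ⟨hy, hy'⟩
    exact integral_g2_of_le A E y hAE hy hy'
  · rintro y ⟨hy, -⟩
    rw [integral_g2_of_ge A E y hAE (by linarith), min_eq_right (by linarith)]
    field_simp
    ring
end

section
/- Define f_{2,p}(x) = ((1−p)x + E)/(2−p), h_{2,p}(x) = ((p+1)x − E)/p, Ǎ₁ = f_{2,p}(A) and Ǎ₂ = f_{2,p}(Ǎ₁). Then for every p ∈ (0,1), h_{2,p}(Ǎ₂) = A if and only if 3p² − 5p + 1 = 0, which for p ∈ (0,1) holds if and only if p = (5 − √13)/6. -/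
/-!
Both `f2p E p` and `h2p E p` are affine maps fixing `E`, with slopes `(1-p)/(2-p)` and `(p+1)/p`.
Since `A ≠ E`, the composite fixes `A` exactly when its slope is `1`, i.e.
`(p+1)(1-p)² = p(2-p)²`, which expands to `3p² - 5p + 1 = 0`. Of the roots `(5 ± √13)/6`
only the smaller one is below `1`.
-/

/-- `f_{2,p}(x) = ((1−p)x + E)/(2−p)`. -/
noncomputable def f2p (E p x : ℝ) : ℝ := ((1 - p) * x + E) / (2 - p)

/-- `h_{2,p}(x) = ((p+1)x − E)/p`. -/
noncomputable def h2p (E p x : ℝ) : ℝ := ((p + 1) * x - E) / p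

/-- With `Ǎ₁ = f_{2,p}(A)` and `Ǎ₂ = f_{2,p}(Ǎ₁)`, for every `p ∈ (0,1)` one has
`h_{2,p}(Ǎ₂) = A ↔ 3p² − 5p + 1 = 0`, which for `p ∈ (0,1)` holds iff
`p = (5 − √13)/6`. -/
theorem critical_threshold (A E : ℝ) (hAE : A < E) :
    ∀ p ∈ Set.Ioo (0 : ℝ) 1,
      (h2p E p (f2p E p (f2p E p A)) = A ↔ 3 * p ^ 2 - 5 * p + 1 = 0) ∧
      (3 * p ^ 2 - 5 * p + 1 = 0 ↔ p = (5 - Real.sqrt 13) / 6) := by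
  rintro p ⟨hp0, hp1⟩
  have hp : p ≠ 0 := hp0.ne'
  have h2 : 2 - p ≠ 0 := by linarith
  have hA : A - E ≠ 0 := by linarith
  -- Both maps fix `E` and scale about it, by `(1-p)/(2-p)` and `(p+1)/p` respectively.
  have key : h2p E p (f2p E p (f2p E p A)) - A =
      (3 * p ^ 2 - 5 * p + 1) * ((A - E) / (p * (2 - p) ^ 2)) := by
    unfold h2p f2p
    field_simp
    ring
  have hc : (A - E) / (p * (2 - p) ^ 2) ≠ 0 := by positivity
  have hs : Real.sqrt 13 ^ 2 = 13 := Real.sq_sqrt (by norm_num)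
  have hs0 : 0 ≤ Real.sqrt 13 := Real.sqrt_nonneg 13
  refine ⟨?_, ?_, ?_⟩
  · rw [← sub_eq_zero, key, mul_eq_zero, or_iff_left hc]
  · intro h
    have hf : (6 * p - 5 + Real.sqrt 13) * (6 * p - 5 - Real.sqrt 13) = 0 := by
      linear_combination 12 * h - hs
    rcases mul_eq_zero.mp hf with h | h
    · linarith
    · -- The other root `(5 + √13)/6` exceeds `1`, since `√13 > 1`.
      nlinarith
  · rintro rfl
    linear_combination hs / 12
end

section
/- Let p₀ = (5 − √13)/6 and, with f_{2,p}(x) = ((1−p)x + E)/(2−p), set Ǎ₁ = f_{2,p₀}(A), Ǎ₂ = f_{2,p₀}(Ǎ₁), Ǎ₃ = f_{2,p₀}(Ǎ₂). Let ν* be the probability measure on [A,B] equal to the mixture (1/3)·Uniform[A,Ǎ₁) + (1/3)·Uniform[Ǎ₁,Ǎ₂) + (1/3)·Uniform[Ǎ₂,Ǎ₃). Then for every Borel probability measure μ on [A,B], G_{p₀}(μ, ν*) ≤ 1/3, and for every Borel probability measure ν on [A,B], G_{p₀}(ν*, ν) ≥ 1/3; hence (ν*, ν*) is a mixed-strategy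 Nash equilibrium of the weighted (p₀, 1−p₀) game and the game has value sup_μ inf_ν G_{p₀}(μ,ν) = inf_ν sup_μ G_{p₀}(μ,ν) = 1/3. -/
/-!
Write `r` for the slope of `f_{2,p₀}`, which contracts towards `E`, so that the break points of
`ν*` are at distances `D, r D, r² D, r³ D` below `E`, where `D = E - A`. In terms of `u = x - E`
and `v = y - E`, `x ≤ P` means `u ≤ r v` and `P < y` means `(p / (1 + p)) u < v`. The critical
weight is the root of `3 p² - 5 p + 1 = 0`, which is exactly the condition
`p / (1 + p) = r²` (`Pp_lt_iff`).

Let `K` (`distCdf`) be the distribution function of the distance to `E`, in units of `D`,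
under `ν*`. Up to null sets, a bid at distance `t > 0` below `E` wins against `ν*` with probability
`K (t / r) - K t + K (r² t)`, and `ν*` wins against such a bid with probability
`K t - K (r t) + 1 - K (t / r²)`. Since the three uniform pieces are images of each other under
scaling by `r` and have equal mass, the first quantity is at most `1/3` (`win_le`) and the second
at least `1/3` (`le_win`). Bids at or above `E` lose to `ν*` almost surely. Integrating
(with Fubini for the second bound) gives `Gp_le` and `le_Gp`, and the equilibrium and minimax
assertions follow formally.
-/


open MeasureTheory

/-- Reference price in the weighted `(p, 1−p)` two-player game. -/
noncomputable def Pp (E p x y : ℝ) : ℝ := (p * x + (1 - p) * y + E) / 2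

/-- Player 1's payoff in the weighted `(p, 1−p)` two-player game. -/
noncomputable def gp (E p x y : ℝ) : ℝ :=
  if (y < x ∧ x ≤ Pp E p x y) ∨ (Pp E p x y ≤ x ∧ x < y) ∨
      (x ≤ Pp E p x y ∧ Pp E p x y < y) then 1
  else if x = y then p
  else 0

/-- Expected payoff of player 1 in the mixed extension of the weighted game. -/
noncomputable def Gp (E p : ℝ) (μ ν : Measure ℝ) : ℝ := ∫ x, ∫ y, gp E p x y ∂ν ∂μ

/-- Density of the mixture `(1/3)·U[a₀,a₁) + (1/3)·U[a₁,a₂) + (1/3)·U[a₂,a₃)`. -/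
noncomputable def mixDens (a₀ a₁ a₂ a₃ : ℝ) (t : ℝ) : ℝ :=
  if t ∈ Set.Ico a₀ a₁ then 1 / (3 * (a₁ - a₀))
  else if t ∈ Set.Ico a₁ a₂ then 1 / (3 * (a₂ - a₁))
  else if t ∈ Set.Ico a₂ a₃ then 1 / (3 * (a₃ - a₂))
  else 0

/-- The measure with Lebesgue density `mixDens`. -/
noncomputable def mixMeas (a₀ a₁ a₂ a₃ : ℝ) : Measure ℝ :=
  volume.withDensity (fun t => ENNReal.ofReal (mixDens a₀ a₁ a₂ a₃ t))

/-- `Δ[A,B]`: Borel probability measures on `ℝ` carried by `[A,B]`. -/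
def Delta (A B : ℝ) : Type :=
  {μ : Measure ℝ // IsProbabilityMeasure μ ∧ μ (Set.Icc A B)ᶜ = 0}

section Auxiliary

open Set

/-! ### The three-piece mixture -/

/-- On disjoint consecutive intervals the mixture is a sum of three weighted Lebesgue measures. -/
theorem mixMeas_apply_eq {a₀ a₁ a₂ a₃ : ℝ} (h₂ : a₁ ≤ a₂) {S : Set ℝ}
    (hS : MeasurableSet S) :
    mixMeas a₀ a₁ a₂ a₃ S =
      ENNReal.ofReal (1 / (3 * (a₁ - a₀))) * volume (Ico a₀ a₁ ∩ S) +
      ENNReal.ofReal (1 / (3 * (a₂ - a₁))) * volume (Ico a₁ a₂ ∩ S) +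
      ENNReal.ofReal (1 / (3 * (a₃ - a₂))) * volume (Ico a₂ a₃ ∩ S) := by
  have key : (fun t => ENNReal.ofReal (mixDens a₀ a₁ a₂ a₃ t)) = fun t =>
      ((Ico a₀ a₁).indicator (fun _ => ENNReal.ofReal (1 / (3 * (a₁ - a₀)))) t +
      (Ico a₁ a₂).indicator (fun _ => ENNReal.ofReal (1 / (3 * (a₂ - a₁)))) t) +
      (Ico a₂ a₃).indicator (fun _ => ENNReal.ofReal (1 / (3 * (a₃ - a₂)))) t := by
    funext t
    unfold mixDens
    by_cases c₁ : t ∈ Ico a₀ a₁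
    · have c₂ : t ∉ Ico a₁ a₂ := fun h => absurd c₁.2 (not_lt.2 h.1)
      have c₃ : t ∉ Ico a₂ a₃ := fun h => absurd c₁.2 (not_lt.2 (h₂.trans h.1))
      simp only [if_pos c₁, indicator_of_mem c₁, indicator_of_notMem c₂, indicator_of_notMem c₃,
        add_zero]
    · by_cases c₂ : t ∈ Ico a₁ a₂
      · have c₃ : t ∉ Ico a₂ a₃ := fun h => absurd c₂.2 (not_lt.2 h.1)
        simp only [if_neg c₁, if_pos c₂, indicator_of_notMem c₁, indicator_of_mem c₂,
          indicator_of_notMem c₃, add_zero, zero_add]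
      · by_cases c₃ : t ∈ Ico a₂ a₃
        · simp only [if_neg c₁, if_neg c₂, if_pos c₃, indicator_of_notMem c₁,
            indicator_of_notMem c₂, indicator_of_mem c₃, zero_add]
        · simp only [if_neg c₁, if_neg c₂, if_neg c₃, indicator_of_notMem c₁,
            indicator_of_notMem c₂, indicator_of_notMem c₃, add_zero, ENNReal.ofReal_zero]
  have m : ∀ (a b : ℝ) (c : ENNReal), Measurable ((Ico a b).indicator (fun _ : ℝ => c)) :=
    fun a b c => measurable_const.indicator measurableSet_Ico
  unfold mixMeas
  rw [withDensity_apply _ hS, key, lintegral_add_right _ (m _ _ _),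
    lintegral_add_right _ (m _ _ _)]
  simp only [lintegral_indicator_const measurableSet_Ico, Measure.restrict_apply measurableSet_Ico]

theorem ofReal_weight {a b : ℝ} (h : a < b) :
    ENNReal.ofReal (1 / (3 * (b - a))) * ENNReal.ofReal (b - a) = ENNReal.ofReal (1 / 3) := by
  have : 0 < b - a := sub_pos.2 h
  rw [← ENNReal.ofReal_mul (by positivity)]
  congr 1
  field_simp

theorem mixMeas_isProb {a₀ a₁ a₂ a₃ : ℝ} (h₁ : a₀ < a₁) (h₂ : a₁ < a₂) (h₃ : a₂ < a₃) :
    IsProbabilityMeasure (mixMeas a₀ a₁ a₂ a₃) := by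
  constructor
  rw [mixMeas_apply_eq h₂.le MeasurableSet.univ]
  simp only [inter_univ, Real.volume_Ico]
  rw [ofReal_weight h₁, ofReal_weight h₂, ofReal_weight h₃,
    ← ENNReal.ofReal_add (by norm_num) (by norm_num),
    ← ENNReal.ofReal_add (by norm_num) (by norm_num)]
  norm_num

theorem mixMeas_compl_Icc {a₀ a₁ a₂ a₃ b : ℝ} (h₁ : a₀ < a₁) (h₂ : a₁ < a₂) (h₃ : a₂ < a₃)
    (hb : a₃ ≤ b) : mixMeas a₀ a₁ a₂ a₃ (Icc a₀ b)ᶜ = 0 := by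
  rw [mixMeas_apply_eq h₂.le measurableSet_Icc.compl]
  have e : ∀ c d : ℝ, a₀ ≤ c → d ≤ b → Ico c d ∩ (Icc a₀ b)ᶜ = ∅ := by
    intro c d hc hd
    ext t
    simp only [mem_inter_iff, mem_Ico, mem_compl_iff, mem_Icc, mem_empty_iff_false, iff_false]
    rintro ⟨⟨u, v⟩, w⟩
    exact w ⟨hc.trans u, v.le.trans hd⟩
  rw [e _ _ le_rfl (by linarith), e _ _ h₁.le (by linarith), e _ _ (by linarith) hb]
  simp

theorem mixMeas_real_Ici {a₀ a₁ a₂ a₃ : ℝ} (h₁ : a₀ < a₁) (h₂ : a₁ < a₂) (h₃ : a₂ < a₃) (c : ℝ) :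
    (mixMeas a₀ a₁ a₂ a₃).real (Ici c) =
      1 / (3 * (a₁ - a₀)) * max (a₁ - max a₀ c) 0 +
      1 / (3 * (a₂ - a₁)) * max (a₂ - max a₁ c) 0 +
      1 / (3 * (a₃ - a₂)) * max (a₃ - max a₂ c) 0 := by
  have q₁ := sub_pos.2 h₁
  have q₂ := sub_pos.2 h₂
  have q₃ := sub_pos.2 h₃
  have e : ∀ a b : ℝ, Ico a b ∩ Ici c = Ico (max a c) b := by
    intro a b
    ext t
    simp only [mem_inter_iff, mem_Ico, mem_Ici, max_le_iff]
    tauto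
  rw [measureReal_def, mixMeas_apply_eq h₂.le measurableSet_Ici, e, e, e]
  simp only [Real.volume_Ico]
  rw [ENNReal.toReal_add (by finiteness) (by finiteness),
    ENNReal.toReal_add (by finiteness) (by finiteness)]
  simp only [ENNReal.toReal_mul, ENNReal.toReal_ofReal']
  rw [max_eq_left (a := 1 / (3 * (a₁ - a₀))) (by positivity),
    max_eq_left (a := 1 / (3 * (a₂ - a₁))) (by positivity),
    max_eq_left (a := 1 / (3 * (a₃ - a₂))) (by positivity)]

/-! ### The distance distribution -/

/-- The candidate equilibrium strategy, parametrised by `E`, `D = E - A` and the contraction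
ratio `r` of `f_{2,p}` towards its fixed point `E`; the break points are `E - r ^ i * D`. -/
noncomputable def nuStar (E D r : ℝ) : Measure ℝ :=
  mixMeas (E - D) (E - r * D) (E - r ^ 2 * D) (E - r ^ 3 * D)

/-- Distribution function of the normalised distance `(E - y) / D` under `nuStar E D r`. -/
noncomputable def distCdf (E D r t : ℝ) : ℝ := (nuStar E D r).real (Ici (E - t * D))

section Cdf

variable {E D r : ℝ}

theorem break_lt (hD : 0 < D) (hr : 0 < r) (hr1 : r < 1) :
    E - D < E - r * D ∧ E - r * D < E - r ^ 2 * D ∧ E - r ^ 2 * D < E - r ^ 3 * D := by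
  have h1 : 0 < (1 - r) * D := mul_pos (by linarith) hD
  have h2 : 0 < r * ((1 - r) * D) := mul_pos hr h1
  have h3 : 0 < r * (r * ((1 - r) * D)) := mul_pos hr h2
  refine ⟨?_, ?_, ?_⟩ <;> nlinarith

theorem nuStar_isProb (hD : 0 < D) (hr : 0 < r) (hr1 : r < 1) :
    IsProbabilityMeasure (nuStar E D r) := by
  obtain ⟨h₁, h₂, h₃⟩ := break_lt (E := E) hD hr hr1
  exact mixMeas_isProb h₁ h₂ h₃

theorem nuStar_singleton (x : ℝ) : nuStar E D r {x} = 0 :=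
  withDensity_absolutelyContinuous _ _ (by simp)

theorem distCdf_formula (hD : 0 < D) (hr : 0 < r) (hr1 : r < 1) (t : ℝ) :
    3 * (1 - r) * distCdf E D r t = max (min 1 t - r) 0 + max (min 1 (t / r) - r) 0 +
      max (min 1 (t / r ^ 2) - r) 0 := by
  obtain ⟨h₁, h₂, h₃⟩ := break_lt (E := E) hD hr hr1
  have e : ∀ k : ℝ, 0 < k → max ((E - k * r * D) - max (E - k * D) (E - t * D)) 0 =
      k * D * max (min 1 (t / k) - r) 0 := by
    intro k hk
    rw [mul_max_of_nonneg _ _ (by positivity), mul_sub, mul_min_of_nonneg _ _ (by positivity),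
      mul_zero, max_sub_sub_left]
    have : k * D * (t / k) = t * D := by field_simp
    rw [this]
    congr 1
    rw [mul_one]
    ring
  have e1 := e 1 one_pos
  have e2 := e r hr
  have e3 := e (r ^ 2) (by positivity)
  rw [one_mul, one_mul, div_one] at e1
  rw [← pow_two] at e2
  rw [← pow_succ] at e3
  have hr' : (1 - r) ≠ 0 := by linarith
  unfold distCdf nuStar
  rw [mixMeas_real_Ici h₁ h₂ h₃, e1, e2, e3]
  have d1 : E - r * D - (E - D) = (1 - r) * D := by ring
  have d2 : E - r ^ 2 * D - (E - r * D) = r * (1 - r) * D := by ring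
  have d3 : E - r ^ 3 * D - (E - r ^ 2 * D) = r ^ 2 * (1 - r) * D := by ring
  rw [d1, d2, d3]
  field_simp

theorem distCdf_mono (hD : 0 < D) (hr : 0 < r) (hr1 : r < 1) {s t : ℝ} (h : s ≤ t) :
    distCdf E D r s ≤ distCdf E D r t := by
  have := nuStar_isProb (E := E) hD hr hr1
  exact measureReal_mono (Ici_subset_Ici.2 (by nlinarith))

theorem distCdf_nonneg (t : ℝ) : 0 ≤ distCdf E D r t := measureReal_nonneg

theorem distCdf_le_one (hD : 0 < D) (hr : 0 < r) (hr1 : r < 1) (t : ℝ) :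
    distCdf E D r t ≤ 1 := by
  have := nuStar_isProb (E := E) hD hr hr1
  exact measureReal_le_one

theorem distCdf_piece₁ (hD : 0 < D) (hr : 0 < r) (hr1 : r < 1) {t : ℝ} (h : r ≤ t) (h' : t ≤ 1) :
    3 * (1 - r) * distCdf E D r t = 2 * (1 - r) + (t - r) := by
  have c1 : 1 ≤ t / r := by rwa [le_div_iff₀ hr, one_mul]
  have c2 : 1 ≤ t / r ^ 2 := by rw [le_div_iff₀ (by positivity)]; nlinarith
  rw [distCdf_formula hD hr hr1, min_eq_right h', min_eq_left c1, min_eq_left c2,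
    max_eq_left (by linarith), max_eq_left (by linarith)]
  ring

theorem distCdf_piece₂ (hD : 0 < D) (hr : 0 < r) (hr1 : r < 1) {t : ℝ} (h : r ≤ t) (h' : t ≤ 1) :
    3 * (1 - r) * distCdf E D r (r * t) = (1 - r) + (t - r) := by
  have e1 : r * t / r = t := by field_simp
  have e2 : r * t / r ^ 2 = t / r := by field_simp
  have c1 : 1 ≤ t / r := by rwa [le_div_iff₀ hr, one_mul]
  have c0 : r * t ≤ r := by nlinarith
  rw [distCdf_formula hD hr hr1, e1, e2, min_eq_right h', min_eq_left c1,
    min_eq_right (c0.trans hr1.le), max_eq_right (by linarith), max_eq_left (by linarith),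
    max_eq_left (by linarith)]
  ring

theorem distCdf_piece₃ (hD : 0 < D) (hr : 0 < r) (hr1 : r < 1) {t : ℝ} (h' : t ≤ 1) :
    3 * (1 - r) * distCdf E D r (r ^ 2 * t) = max (t - r) 0 := by
  have e1 : r ^ 2 * t / r = r * t := by field_simp
  have e2 : r ^ 2 * t / r ^ 2 = t := by field_simp
  have c0 : r * t ≤ r := by nlinarith
  have c1 : r ^ 2 * t ≤ r := by nlinarith
  rw [distCdf_formula hD hr hr1, e1, e2, min_eq_right h',
    min_eq_right (c0.trans hr1.le), min_eq_right (c1.trans hr1.le),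
    max_eq_right (by linarith), max_eq_right (by linarith)]
  ring

theorem distCdf_eq_one (hD : 0 < D) (hr : 0 < r) (hr1 : r < 1) {t : ℝ} (h : 1 ≤ t) :
    distCdf E D r t = 1 := by
  have h1 := distCdf_piece₁ (E := E) hD hr hr1 hr1.le le_rfl
  have h2 : distCdf E D r 1 = 1 := by
    have : (1 - r) ≠ 0 := by linarith
    field_simp at h1
    linarith
  exact le_antisymm (distCdf_le_one hD hr hr1 t) (h2 ▸ distCdf_mono hD hr hr1 h)

theorem distCdf_eq_zero (hD : 0 < D) (hr : 0 < r) (hr1 : r < 1) {t : ℝ} (h : t ≤ r ^ 3) :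
    distCdf E D r t = 0 := by
  have h1 := distCdf_piece₃ (E := E) hD hr hr1 hr1.le
  rw [sub_self, max_self, ← pow_succ] at h1
  have : 0 < 1 - r := by linarith
  have h2 : distCdf E D r (r ^ 3) = 0 := by
    rcases mul_eq_zero.1 h1 with h | h
    · linarith
    · exact h
  exact le_antisymm (h2 ▸ distCdf_mono hD hr hr1 h) (distCdf_nonneg t)

/-- Up to a power of `r`, every `t` between `r ^ 3` and `1` is a point of `[r, 1]`. -/
theorem scale_cases (hr : 0 < r) (t : ℝ) :
    t ≤ r ^ 3 ∨ (∃ s, r ≤ s ∧ s ≤ 1 ∧ t = r ^ 2 * s) ∨ (∃ s, r ≤ s ∧ s ≤ 1 ∧ t = r * s) ∨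
      r ≤ t := by
  by_cases h1 : r ≤ t
  · exact .inr (.inr (.inr h1))
  by_cases h2 : r ^ 2 ≤ t
  · refine .inr (.inr (.inl ⟨t / r, ?_, ?_, by field_simp⟩))
    · rw [le_div_iff₀ hr]; nlinarith
    · rw [div_le_iff₀ hr]; linarith
  by_cases h3 : r ^ 3 ≤ t
  · refine .inr (.inl ⟨t / r ^ 2, ?_, ?_, by field_simp⟩)
    · rw [le_div_iff₀ (by positivity)]; nlinarith
    · rw [div_le_iff₀ (by positivity)]; linarith
  · exact .inl (by linarith)

/-- The left side is the probability that a bid of player 1 at distance `t * D` below `E` wins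
against `ν*`. It equals `1/3` for `t ≥ r ^ 3`: below `t = r` the three uniform pieces are shifted
into each other, and on `[r, 1]` the gain `K (r² t)` balances the loss `1 - K t`. -/
theorem win_le (hD : 0 < D) (hr : 0 < r) (hr1 : r < 1) {t : ℝ} (ht0 : 0 < t) (ht : t ≤ 1) :
    distCdf E D r (t / r) - distCdf E D r t + distCdf E D r (r ^ 2 * t) ≤ 1 / 3 := by
  have hq : 0 < 3 * (1 - r) := by linarith
  refine le_of_mul_le_mul_left ?_ hq
  rw [mul_add, mul_sub]
  rcases scale_cases hr t with h | ⟨s, h, h', rfl⟩ | ⟨s, h, h', rfl⟩ | h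
  · have c : t / r ≤ r ^ 2 * 1 := by rw [div_le_iff₀ hr]; nlinarith
    have k1 := mul_le_mul_of_nonneg_left (distCdf_mono (E := E) hD hr hr1 c) hq.le
    rw [distCdf_piece₃ hD hr hr1 le_rfl, max_eq_left (by linarith)] at k1
    have c2 : r ^ 2 * t ≤ r ^ 3 := by
      have : r ^ 2 ≤ 1 := pow_le_one₀ hr.le hr1.le
      nlinarith
    rw [distCdf_eq_zero hD hr hr1 h, distCdf_eq_zero hD hr hr1 c2]
    linarith
  · have e : r ^ 2 * s / r = r * s := by field_simp
    have c2 : r ^ 2 * (r ^ 2 * s) ≤ r ^ 3 := by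
      have : 0 < r ^ 3 := by positivity
      have : r * s ≤ 1 := by nlinarith
      nlinarith
    rw [e, distCdf_piece₂ hD hr hr1 h h', distCdf_piece₃ hD hr hr1 h',
      distCdf_eq_zero hD hr hr1 c2, max_eq_left (by linarith)]
    linarith
  · have e : r * s / r = s := by field_simp
    have c2 : r ^ 2 * (r * s) ≤ r ^ 3 := by
      have : 0 < r ^ 3 := by positivity
      nlinarith
    rw [e, distCdf_piece₁ hD hr hr1 h h', distCdf_piece₂ hD hr hr1 h h',
      distCdf_eq_zero hD hr hr1 c2]
    linarith
  · rw [distCdf_eq_one hD hr hr1 ((le_div_iff₀ hr).2 (by linarith)),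
      distCdf_piece₁ hD hr hr1 h ht, distCdf_piece₃ hD hr hr1 ht, max_eq_left (by linarith)]
    linarith

/-- For `t > 0` the right side is the probability that player 1, playing `ν*`, wins against a bid
at distance `t * D` below `E`. -/
theorem le_win (hD : 0 < D) (hr : 0 < r) (hr1 : r < 1) {t : ℝ} (ht : t ≤ 1) :
    1 / 3 ≤ distCdf E D r t - distCdf E D r (r * t) + (1 - distCdf E D r (t / r ^ 2)) := by
  have hq : 0 < 3 * (1 - r) := by linarith
  refine le_of_mul_le_mul_left ?_ hq
  rw [mul_add, mul_sub (3 * (1 - r)), mul_sub (3 * (1 - r)) 1]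
  rcases scale_cases hr t with h | ⟨s, h, h', rfl⟩ | ⟨s, h, h', rfl⟩ | h
  · have c : t / r ^ 2 ≤ r := by rw [div_le_iff₀ (by positivity)]; nlinarith
    have k1 := mul_le_mul_of_nonneg_left (distCdf_mono (E := E) hD hr hr1 c) hq.le
    rw [distCdf_piece₁ hD hr hr1 le_rfl hr1.le] at k1
    have c2 : r * t ≤ r ^ 3 := by
      have : 0 < r ^ 3 := by positivity
      nlinarith
    rw [distCdf_eq_zero hD hr hr1 h, distCdf_eq_zero hD hr hr1 c2]
    linarith
  · have e : r ^ 2 * s / r ^ 2 = s := by field_simp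
    have c2 : r * (r ^ 2 * s) ≤ r ^ 3 := by
      have : 0 < r ^ 3 := by positivity
      nlinarith
    rw [e, distCdf_piece₁ hD hr hr1 h h', distCdf_piece₃ hD hr hr1 h',
      distCdf_eq_zero hD hr hr1 c2, max_eq_left (by linarith)]
    linarith
  · have e : r * (r * s) = r ^ 2 * s := by ring
    have k := mul_nonneg hq.le (sub_nonneg.2 (distCdf_le_one (E := E) hD hr hr1 (r * s / r ^ 2)))
    rw [e, distCdf_piece₂ hD hr hr1 h h', distCdf_piece₃ hD hr hr1 h', max_eq_left (by linarith)]
    linarith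
  · have k := mul_nonneg hq.le (sub_nonneg.2 (distCdf_le_one (E := E) hD hr hr1 (t / r ^ 2)))
    rw [distCdf_piece₁ hD hr hr1 h ht, distCdf_piece₂ hD hr hr1 h ht]
    linarith

theorem nuStar_real_Ico (hD : 0 < D) (hr : 0 < r) (hr1 : r < 1) {s t : ℝ} (h : s ≤ t) :
    (nuStar E D r).real (Ico (E - t * D) (E - s * D)) = distCdf E D r t - distCdf E D r s := by
  have := nuStar_isProb (E := E) hD hr hr1
  rw [← Ici_sdiff_Ici, measureReal_sdiff (Ici_subset_Ici.2 (by nlinarith)) measurableSet_Ici]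
  rfl

theorem nuStar_real_Iio (hD : 0 < D) (hr : 0 < r) (hr1 : r < 1) (t : ℝ) :
    (nuStar E D r).real (Iio (E - t * D)) = 1 - distCdf E D r t := by
  have := nuStar_isProb (E := E) hD hr hr1
  rw [← compl_Ici, probReal_compl_eq_one_sub measurableSet_Ici]
  rfl

theorem nuStar_ae_lt (hD : 0 < D) (hr : 0 < r) (hr1 : r < 1) :
    ∀ᵐ y ∂(nuStar E D r), y < E := by
  have := nuStar_isProb (E := E) hD hr hr1
  have h : distCdf E D r 0 = 0 := distCdf_eq_zero hD hr hr1 (by positivity)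
  rw [distCdf, measureReal_eq_zero_iff] at h
  rw [ae_iff]
  convert h using 2
  ext y
  simp

end Cdf

/-! ### Payoffs -/

section Payoff

variable {E p : ℝ}

theorem gp_nonneg (hp : 0 ≤ p) (x y : ℝ) : 0 ≤ gp E p x y := by
  unfold gp
  split_ifs <;> simp [hp]

theorem gp_le_one (hp : p ≤ 1) (x y : ℝ) : gp E p x y ≤ 1 := by
  unfold gp
  split_ifs <;> simp [hp]

theorem measurable_gp : Measurable (Function.uncurry (gp E p)) := by
  have hP : Measurable fun z : ℝ × ℝ => Pp E p z.1 z.2 := by unfold Pp; fun_prop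
  refine Measurable.ite ?_ measurable_const (Measurable.ite ?_ measurable_const measurable_const)
  · exact ((measurableSet_lt measurable_snd measurable_fst).inter
      (measurableSet_le measurable_fst hP)).union
      (((measurableSet_le hP measurable_fst).inter
      (measurableSet_lt measurable_fst measurable_snd)).union
      ((measurableSet_le measurable_fst hP).inter (measurableSet_lt hP measurable_snd)))
  · exact measurableSet_eq_fun measurable_fst measurable_snd

theorem integrable_gp_prod (hp : 0 ≤ p) (hp' : p ≤ 1) (μ ν : Measure ℝ) [IsProbabilityMeasure μ]
    [IsProbabilityMeasure ν] : Integrable (Function.uncurry (gp E p)) (μ.prod ν) := by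
  refine Integrable.of_bound measurable_gp.aestronglyMeasurable 1 (ae_of_all _ fun z => ?_)
  change ‖gp E p z.1 z.2‖ ≤ 1
  rw [Real.norm_of_nonneg (gp_nonneg hp _ _)]
  exact gp_le_one hp' _ _

theorem inner_integral_nonneg (hp : 0 ≤ p) (ν : Measure ℝ) (x : ℝ) : 0 ≤ ∫ y, gp E p x y ∂ν :=
  integral_nonneg fun _ => gp_nonneg hp _ _

theorem Gp_nonneg (hp : 0 ≤ p) (μ ν : Measure ℝ) : 0 ≤ Gp E p μ ν :=
  integral_nonneg fun x => inner_integral_nonneg hp ν x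

theorem Gp_le_one (hp : 0 ≤ p) (hp' : p ≤ 1) (μ ν : Measure ℝ) [IsProbabilityMeasure μ]
    [IsProbabilityMeasure ν] : Gp E p μ ν ≤ 1 := by
  have h1 : ∀ x, ∫ y, gp E p x y ∂ν ≤ 1 := fun x => by
    simpa using integral_mono_of_nonneg (μ := ν) (ae_of_all _ fun y => gp_nonneg hp x y)
      (integrable_const (1 : ℝ)) (ae_of_all _ fun y => gp_le_one (E := E) hp' x y)
  simpa [Gp] using integral_mono_of_nonneg (μ := μ) (ae_of_all _ fun x => inner_integral_nonneg hp ν x)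
      (integrable_const (1 : ℝ)) (ae_of_all _ h1)

theorem Pp_le_iff {r x y : ℝ} (hp : p < 1) (hr : r * (2 - p) = 1 - p) :
    Pp E p x y ≤ x ↔ r * (y - E) ≤ x - E := by
  have h2 : 0 < 2 - p := by linarith
  rw [← mul_le_mul_iff_of_pos_left (b := r * (y - E)) h2]
  have : (2 - p) * (r * (y - E)) = (1 - p) * (y - E) := by rw [← hr]; ring
  rw [this]
  unfold Pp
  constructor <;> intro h <;> linarith

theorem le_Pp_iff {r x y : ℝ} (hp : p < 1) (hr : r * (2 - p) = 1 - p) :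
    x ≤ Pp E p x y ↔ x - E ≤ r * (y - E) := by
  have h2 : 0 < 2 - p := by linarith
  rw [← mul_le_mul_iff_of_pos_left (b := x - E) h2]
  have : (2 - p) * (r * (y - E)) = (1 - p) * (y - E) := by rw [← hr]; ring
  rw [this]
  unfold Pp
  constructor <;> intro h <;> linarith

/-- At the critical weight, `p / (1 + p)` is the square of the slope `r` of `f_{2,p}`. -/
theorem Pp_lt_iff {r x y : ℝ} (hp : 0 ≤ p) (hr2 : r ^ 2 * (1 + p) = p) :
    Pp E p x y < y ↔ r ^ 2 * (x - E) < y - E := by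
  have h2 : 0 < 1 + p := by linarith
  rw [← mul_lt_mul_iff_of_pos_left (b := r ^ 2 * (x - E)) h2]
  have : (1 + p) * (r ^ 2 * (x - E)) = p * (x - E) := by linear_combination (x - E) * hr2
  rw [this]
  unfold Pp
  constructor <;> intro h <;> linarith

variable {D r : ℝ}

theorem inner_le (hp : 0 ≤ p) (hp' : p < 1) (hr : r * (2 - p) = 1 - p) (hr2 : r ^ 2 * (1 + p) = p)
    (hD : 0 < D) (hr0 : 0 < r) (hr1 : r < 1) {t : ℝ} (ht : t ≤ 1) :
    ∫ y, gp E p (E - t * D) y ∂(nuStar E D r) ≤ 1 / 3 := by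
  have := nuStar_isProb (E := E) hD hr0 hr1
  rcases le_or_gt t 0 with h0 | h0
  · have : ∀ᵐ y ∂(nuStar E D r), gp E p (E - t * D) y = 0 := by
      filter_upwards [nuStar_ae_lt hD hr0 hr1] with y hy
      have hx : 0 ≤ -(t * D) := by nlinarith
      have c : ¬ (E - t * D ≤ Pp E p (E - t * D) y) := by
        rw [le_Pp_iff hp' hr]
        nlinarith
      unfold gp
      rw [if_neg, if_neg]
      · intro h; linarith
      · rintro (⟨_, h⟩ | ⟨_, h⟩ | ⟨h, _⟩)
        · exact c h
        · linarith
        · exact c h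
    rw [integral_congr_ae this]
    norm_num
  · set S : Set ℝ := Ico (E - t / r * D) (E - t * D) ∪ Ici (E - r ^ 2 * t * D) with hS
    have hSm : MeasurableSet S := measurableSet_Ico.union measurableSet_Ici
    have hne : ∀ᵐ y ∂(nuStar E D r), y ≠ E - t * D := by
      rw [ae_iff]
      simpa using nuStar_singleton (E - t * D)
    have hle : ∀ᵐ y ∂(nuStar E D r), gp E p (E - t * D) y ≤ S.indicator (fun _ => (1 : ℝ)) y := by
      filter_upwards [nuStar_ae_lt hD hr0 hr1, hne] with y hy hy'
      by_cases hyS : y ∈ S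
      · rw [indicator_of_mem hyS]
        exact gp_le_one hp'.le _ _
      · rw [indicator_of_notMem hyS]
        refine le_of_eq ?_
        unfold gp
        rw [if_neg, if_neg (Ne.symm hy')]
        rw [le_Pp_iff hp' hr, Pp_le_iff hp' hr, Pp_lt_iff hp hr2]
        intro hcond
        apply hyS
        rcases hcond with ⟨h1, h2⟩ | ⟨h1, h2⟩ | ⟨_, h2⟩
        · left
          refine ⟨?_, h1⟩
          have : t / r * D = t * D / r := by ring
          rw [this, sub_le_comm, le_div_iff₀ hr0]
          nlinarith
        · exfalso
          nlinarith
        · right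
          rw [mem_Ici]
          nlinarith
    have hint := integral_mono_of_nonneg (ae_of_all _ fun y => gp_nonneg hp (E - t * D) y)
      ((integrable_const (1 : ℝ)).indicator hSm) hle
    rw [integral_indicator_const _ hSm, smul_eq_mul, mul_one] at hint
    refine hint.trans ((measureReal_union_le _ _).trans ?_)
    have c : t ≤ t / r := by rw [le_div_iff₀ hr0]; nlinarith
    rw [nuStar_real_Ico hD hr0 hr1 c]
    exact win_le hD hr0 hr1 h0 ht

theorem le_inner (hp : 0 ≤ p) (hp' : p < 1) (hr : r * (2 - p) = 1 - p) (hr2 : r ^ 2 * (1 + p) = p)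
    (hD : 0 < D) (hr0 : 0 < r) (hr1 : r < 1) {t : ℝ} (ht : t ≤ 1) :
    1 / 3 ≤ ∫ x, gp E p x (E - t * D) ∂(nuStar E D r) := by
  have := nuStar_isProb (E := E) hD hr0 hr1
  have hgi : Integrable (fun x => gp E p x (E - t * D)) (nuStar E D r) := by
    refine Integrable.of_bound (measurable_gp.comp
      (measurable_id.prodMk measurable_const)).aestronglyMeasurable 1 (ae_of_all _ fun z => ?_)
    rw [Real.norm_of_nonneg (gp_nonneg hp _ _)]
    exact gp_le_one hp'.le _ _
  rcases le_or_gt t 0 with h0 | h0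
  · have : ∀ᵐ x ∂(nuStar E D r), gp E p x (E - t * D) = 1 := by
      filter_upwards [nuStar_ae_lt hD hr0 hr1] with x hx
      have hy : 0 ≤ -(t * D) := by nlinarith
      unfold gp
      rw [if_pos]
      right; right
      rw [le_Pp_iff hp' hr, Pp_lt_iff hp hr2]
      have : 0 < r ^ 2 * (E - x) := mul_pos (by positivity) (by linarith)
      constructor <;> nlinarith
    rw [integral_congr_ae this]
    norm_num
  · set S : Set ℝ := Ico (E - t * D) (E - r * t * D) ∪ Iio (E - t / r ^ 2 * D) with hS
    have hSm : MeasurableSet S := measurableSet_Ico.union measurableSet_Iio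
    have hne : ∀ᵐ x ∂(nuStar E D r), x ≠ E - t * D := by
      rw [ae_iff]
      simpa using nuStar_singleton (E - t * D)
    have c0 : t ≤ t / r ^ 2 := by rw [le_div_iff₀ (by positivity)]; nlinarith
    have hle : ∀ᵐ x ∂(nuStar E D r), S.indicator (fun _ => (1 : ℝ)) x ≤ gp E p x (E - t * D) := by
      filter_upwards [hne] with x hx
      by_cases hyS : x ∈ S
      · rw [indicator_of_mem hyS]
        refine le_of_eq ?_
        unfold gp
        rw [if_pos]
        rw [le_Pp_iff hp' hr, Pp_le_iff hp' hr, Pp_lt_iff hp hr2]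
        have htD : 0 < t * D := mul_pos h0 hD
        rcases hyS with ⟨h1, h2⟩ | h1
        · left
          exact ⟨lt_of_le_of_ne h1 (Ne.symm hx), by linarith⟩
        · right; right
          have h1' : t / r ^ 2 * D < E - x := by
            have : x < E - t / r ^ 2 * D := h1
            linarith
          have h3 : t * D ≤ t / r ^ 2 * D := mul_le_mul_of_nonneg_right c0 hD.le
          have h4 : r ^ 2 * (t / r ^ 2 * D) = t * D := by field_simp
          have h5 := mul_lt_mul_of_pos_left h1' (pow_pos hr0 2)
          constructor <;> nlinarith
      · rw [indicator_of_notMem hyS]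
        exact gp_nonneg hp _ _
    have hint := integral_mono_ae
      ((integrable_const (1 : ℝ)).indicator hSm) hgi hle
    rw [integral_indicator_const _ hSm, smul_eq_mul, mul_one] at hint
    refine le_trans ?_ hint
    have hdisj : Disjoint (Ico (E - t * D) (E - r * t * D)) (Iio (E - t / r ^ 2 * D)) := by
      rw [Set.disjoint_left]
      rintro x ⟨h1, _⟩ h2
      have h2' : x < E - t / r ^ 2 * D := h2
      nlinarith
    rw [measureReal_union hdisj measurableSet_Iio, nuStar_real_Ico hD hr0 hr1 (by nlinarith),
      nuStar_real_Iio hD hr0 hr1]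
    exact le_win hD hr0 hr1 ht

theorem Gp_le (hp : 0 ≤ p) (hp' : p < 1) (hr : r * (2 - p) = 1 - p) (hr2 : r ^ 2 * (1 + p) = p)
    (hD : 0 < D) (hr0 : 0 < r) (hr1 : r < 1) (μ : Measure ℝ) [IsProbabilityMeasure μ]
    (hμ : ∀ᵐ x ∂μ, E - D ≤ x) : Gp E p μ (nuStar E D r) ≤ 1 / 3 := by
  have h : ∀ᵐ x ∂μ, ∫ y, gp E p x y ∂(nuStar E D r) ≤ 1 / 3 := by
    filter_upwards [hμ] with x hx
    have ht : (E - x) / D ≤ 1 := by rw [div_le_iff₀ hD]; linarith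
    have := inner_le (E := E) hp hp' hr hr2 hD hr0 hr1 ht
    rwa [div_mul_cancel₀ _ hD.ne', sub_sub_cancel] at this
  simpa [Gp] using integral_mono_of_nonneg
    (ae_of_all _ fun x => inner_integral_nonneg hp (nuStar E D r) x)
    (integrable_const (1 / 3 : ℝ)) h

theorem le_Gp (hp : 0 ≤ p) (hp' : p < 1) (hr : r * (2 - p) = 1 - p) (hr2 : r ^ 2 * (1 + p) = p)
    (hD : 0 < D) (hr0 : 0 < r) (hr1 : r < 1) (ν : Measure ℝ) [IsProbabilityMeasure ν]
    (hν : ∀ᵐ x ∂ν, E - D ≤ x) : 1 / 3 ≤ Gp E p (nuStar E D r) ν := by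
  have := nuStar_isProb (E := E) hD hr0 hr1
  have h : ∀ᵐ y ∂ν, 1 / 3 ≤ ∫ x, gp E p x y ∂(nuStar E D r) := by
    filter_upwards [hν] with x hx
    have ht : (E - x) / D ≤ 1 := by rw [div_le_iff₀ hD]; linarith
    have := le_inner (E := E) hp hp' hr hr2 hD hr0 hr1 ht
    rwa [div_mul_cancel₀ _ hD.ne', sub_sub_cancel] at this
  have hI := integrable_gp_prod (E := E) hp hp'.le (nuStar E D r) ν
  rw [Gp, integral_integral_swap hI]
  simpa using integral_mono_ae (integrable_const (1 / 3 : ℝ)) hI.integral_prod_right h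

end Payoff

theorem ae_ge_of_compl_Icc {A B : ℝ} {μ : Measure ℝ} (h : μ (Icc A B)ᶜ = 0) :
    ∀ᵐ x ∂μ, A ≤ x := by
  have : ∀ᵐ x ∂μ, x ∈ Icc A B := mem_ae_iff.2 h
  filter_upwards [this] with x hx using hx.1

end Auxiliary

/-- At the critical weight `p₀ = (5−√13)/6`, the mixture of the three uniforms on
`[A,Ǎ₁)`, `[Ǎ₁,Ǎ₂)`, `[Ǎ₂,Ǎ₃)` (each with weight `1/3`) is a mixed-strategy Nash
equilibrium of the weighted `(p₀, 1−p₀)` game, and the game has value `1/3`. -/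
theorem critical_regime_equilibrium (A E B : ℝ) (hAE : A < E) (hEB : E < B)
    (p₀ : ℝ) (hp₀ : p₀ = (5 - Real.sqrt 13) / 6)
    (a₁ a₂ a₃ : ℝ) (ha₁ : a₁ = f2p E p₀ A) (ha₂ : a₂ = f2p E p₀ a₁)
    (ha₃ : a₃ = f2p E p₀ a₂) :
    IsProbabilityMeasure (mixMeas A a₁ a₂ a₃) ∧
    (mixMeas A a₁ a₂ a₃) (Set.Icc A B)ᶜ = 0 ∧
    (∀ μ : Measure ℝ, IsProbabilityMeasure μ → μ (Set.Icc A B)ᶜ = 0 →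
      Gp E p₀ μ (mixMeas A a₁ a₂ a₃) ≤ 1 / 3) ∧
    (∀ ν : Measure ℝ, IsProbabilityMeasure ν → ν (Set.Icc A B)ᶜ = 0 →
      1 / 3 ≤ Gp E p₀ (mixMeas A a₁ a₂ a₃) ν) ∧
    Gp E p₀ (mixMeas A a₁ a₂ a₃) (mixMeas A a₁ a₂ a₃) = 1 / 3 ∧
    (⨆ μ : Delta A B, ⨅ ν : Delta A B, Gp E p₀ μ.1 ν.1) = 1 / 3 ∧
    (⨅ ν : Delta A B, ⨆ μ : Delta A B, Gp E p₀ μ.1 ν.1) = 1 / 3 := by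
  have hs2 : Real.sqrt 13 ^ 2 = 13 := Real.sq_sqrt (by norm_num)
  have hs3 : 3 < Real.sqrt 13 := Real.lt_sqrt_of_sq_lt (by norm_num)
  have hs4 : Real.sqrt 13 < 4 := (Real.sqrt_lt' (by norm_num)).2 (by norm_num)
  have hp : 0 ≤ p₀ := by rw [hp₀]; linarith
  have hp' : p₀ < 1 := by rw [hp₀]; linarith
  have hquad : 3 * p₀ ^ 2 - 5 * p₀ + 1 = 0 := by rw [hp₀]; linear_combination hs2 / 12
  have h2p : (2 - p₀) ≠ 0 := by linarith
  obtain ⟨r, hrdef⟩ : ∃ r, r = (1 - p₀) / (2 - p₀) := ⟨_, rfl⟩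
  have hr : r * (2 - p₀) = 1 - p₀ := by rw [hrdef]; field_simp
  have hr0 : 0 < r := by rw [hrdef]; exact div_pos (by linarith) (by linarith)
  have hr1 : r < 1 := by rw [hrdef, div_lt_one (by linarith)]; linarith
  have hr2 : r ^ 2 * (1 + p₀) = p₀ := by
    rw [hrdef, div_pow, div_mul_eq_mul_div, div_eq_iff (pow_ne_zero 2 h2p)]
    linear_combination hquad
  have hf : ∀ x, f2p E p₀ x = E + r * (x - E) := by
    intro x
    rw [f2p, div_eq_iff h2p]
    linear_combination (E - x) * hr
  obtain ⟨D, hDdef⟩ : ∃ D, D = E - A := ⟨_, rfl⟩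
  have hD : 0 < D := by linarith
  have hA : E - D = A := by linarith
  have hN : mixMeas A a₁ a₂ a₃ = nuStar E D r := by
    have e1 : a₁ = E - r * D := by rw [ha₁, hf, hDdef]; ring
    have e2 : a₂ = E - r ^ 2 * D := by rw [ha₂, hf, e1]; ring
    have e3 : a₃ = E - r ^ 3 * D := by rw [ha₃, hf, e2]; ring
    rw [nuStar, hA, e1, e2, e3]
  rw [hN]
  have hprob := nuStar_isProb (E := E) hD hr0 hr1
  have hsupp : nuStar E D r (Set.Icc A B)ᶜ = 0 := by
    obtain ⟨h₁, h₂, h₃⟩ := break_lt (E := E) hD hr0 hr1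
    have : 0 < r ^ 3 * D := by positivity
    have h := mixMeas_compl_Icc (b := B) h₁ h₂ h₃ (by linarith)
    rw [hA] at h
    rwa [nuStar, hA]
  have hup : ∀ μ : Measure ℝ, IsProbabilityMeasure μ → μ (Set.Icc A B)ᶜ = 0 →
      Gp E p₀ μ (nuStar E D r) ≤ 1 / 3 := fun μ _ h =>
    Gp_le hp hp' hr hr2 hD hr0 hr1 μ (hA ▸ ae_ge_of_compl_Icc h)
  have hlow : ∀ ν : Measure ℝ, IsProbabilityMeasure ν → ν (Set.Icc A B)ᶜ = 0 →
      1 / 3 ≤ Gp E p₀ (nuStar E D r) ν := fun ν _ h =>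
    le_Gp hp hp' hr hr2 hD hr0 hr1 ν (hA ▸ ae_ge_of_compl_Icc h)
  let N : Delta A B := ⟨nuStar E D r, hprob, hsupp⟩
  have : Nonempty (Delta A B) := ⟨N⟩
  -- Payoffs lie in `[0, 1]`, so the real-valued suprema and infima below are genuine.
  have hle1 : ∀ μ ν : Delta A B, Gp E p₀ μ.1 ν.1 ≤ 1 := fun μ ν => by
    have := μ.2.1
    have := ν.2.1
    exact Gp_le_one hp hp'.le _ _
  have hbelow : ∀ μ : Delta A B, BddBelow (Set.range fun ν : Delta A B => Gp E p₀ μ.1 ν.1) :=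
    fun μ => ⟨0, by rintro _ ⟨ν, rfl⟩; exact Gp_nonneg hp _ _⟩
  have habove : ∀ ν : Delta A B, BddAbove (Set.range fun μ : Delta A B => Gp E p₀ μ.1 ν.1) :=
    fun ν => ⟨1, by rintro _ ⟨μ, rfl⟩; exact hle1 μ ν⟩
  have hinf : ∀ μ : Delta A B, (⨅ ν : Delta A B, Gp E p₀ μ.1 ν.1) ≤ 1 / 3 := fun μ =>
    (ciInf_le (hbelow μ) N).trans (hup _ μ.2.1 μ.2.2)
  have hsup : ∀ ν : Delta A B, 1 / 3 ≤ ⨆ μ : Delta A B, Gp E p₀ μ.1 ν.1 := fun ν =>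
    (hlow _ ν.2.1 ν.2.2).trans (le_ciSup (habove ν) N)
  refine ⟨hprob, hsupp, hup, hlow, le_antisymm (hup _ hprob hsupp) (hlow _ hprob hsupp),
    le_antisymm (ciSup_le hinf) ?_, le_antisymm ?_ (le_ciInf hsup)⟩
  · exact (le_ciInf fun ν : Delta A B => hlow _ ν.2.1 ν.2.2).trans
      (le_ciSup (f := fun μ : Delta A B => ⨅ ν : Delta A B, Gp E p₀ μ.1 ν.1)
        ⟨1 / 3, by rintro _ ⟨μ, rfl⟩; exact hinf μ⟩ N)
  · exact (ciInf_le (f := fun ν : Delta A B => ⨆ μ : Delta A B, Gp E p₀ μ.1 ν.1)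
      ⟨1 / 3, by rintro _ ⟨ν, rfl⟩; exact hsup ν⟩ N).trans
      (ciSup_le fun μ : Delta A B => hup _ μ.2.1 μ.2.2)
end

section
/- In the N-player Moroccan procurement game, every player can robustly secure the whole prize against any opponent profile: for every player i and every x_{-i} ∈ [A,B]^{N−1} there exist a bid x̄_i ∈ [A,B] and δ > 0 such that for every y_{-i} ∈ [A,B]^{N−1} with ‖y_{-i} − x_{-i}‖ < δ one has g_i(x̄_i, y_{-i}) = 1 (player i is the unique winner). In particular the game is payoff secure and better-reply secure. -/
/-!
Let `S` be the sum of the opponents' bids. Player `i`'s bid `t` is at most the reference price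
exactly when `t ≤ T`, where `T = (S + N E) / (2 N - 1)`, and `A < T < B`. Bidding `t = T - ε` gives
the reference price `T - ε / (2 N)`, which lies strictly between `t` and `T`. For `ε` small every
opponent bid below `T` is also below `t`, while every other opponent bid is at least `T` and so
exceeds the reference price; hence player `i` is the only winner. All these inequalities are strict,
with slack of order `ε / N`, so they survive perturbations of the opponents' bids of size
`δ = ε / (4 N)`.
-/

open scoped BigOperators

/-- A player whose bid is at most the reference price, with every other bid either lower or above
the reference price, wins alone. -/
lemma payoff_eq_one_of_unique {N : ℕ} {E : ℝ} {i : Fin N} {z : Fin N → ℝ}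
    (hi : z i ≤ refPrice N E z)
    (hother : ∀ j, j ≠ i → z j < z i ∨ refPrice N E z < z j) :
    payoff N E i z = 1 := by
  have hw : winners N E z = {i} := by
    unfold winners
    rw [if_pos ⟨i, hi⟩]
    ext k
    simp only [Set.mem_ofPred_eq, Set.mem_singleton_iff]
    constructor
    · rintro ⟨hk, hmax⟩
      by_contra hne
      rcases hother k hne with h | h
      · exact absurd (hmax i hi) (not_le.mpr h)
      · exact absurd hk (not_le.mpr h)
    · rintro rfl
      refine ⟨hi, fun j hj => ?_⟩
      by_cases hjk : j = k
      · rw [hjk]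
      · rcases hother j hjk with h | h
        · exact h.le
        · exact absurd hj (not_le.mpr h)
  simp [payoff, hw]

/-- A margin `ε` keeping `T - ε` above `A` and separating it from all values of `x` below `T`. -/
lemma exists_margin {N : ℕ} {A T : ℝ} (hAT : A < T) (x : Fin N → ℝ) :
    ∃ ε > (0 : ℝ), A + ε < T ∧ ∀ j, x j < T → x j + 2 * ε < T := by
  open Filter Topology in
  have h1 : ∀ᶠ ε : ℝ in 𝓝[>] 0, A + ε < T := by
    refine nhdsWithin_le_nhds (ContinuousAt.eventually_lt (f := fun ε : ℝ => A + ε)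
      (g := fun _ => T) (by fun_prop) (by fun_prop) (by simpa using hAT))
  open Filter Topology in
  have h2 : ∀ᶠ ε : ℝ in 𝓝[>] 0, ∀ j, x j < T → x j + 2 * ε < T := by
    refine Filter.eventually_all.mpr fun j => ?_
    by_cases hj : x j < T
    · have : ∀ᶠ ε : ℝ in 𝓝[>] 0, x j + 2 * ε < T :=
        nhdsWithin_le_nhds (ContinuousAt.eventually_lt (f := fun ε : ℝ => x j + 2 * ε)
          (g := fun _ => T) (by fun_prop) (by fun_prop) (by simpa using hj))
      filter_upwards [this] with ε hε _ using hε
    · exact Filter.Eventually.of_forall fun ε h => absurd h hj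
  obtain ⟨ε, ⟨hA, hsep⟩, hpos⟩ := ((h1.and h2).and self_mem_nhdsWithin).exists
  exact ⟨ε, hpos, hA, hsep⟩

/-- Robust payoff security of the `N`-player Moroccan procurement game: for every
player `i` and every opponent profile in `[A,B]^{N−1}`, player `i` has a bid
`x̄ᵢ ∈ [A,B]` winning the whole prize against every nearby opponent profile. -/
theorem robust_payoff_security (A E B : ℝ) (hAE : A < E) (hEB : E < B)
    (N : ℕ) (hN : 2 ≤ N) (i : Fin N) (x : Fin N → ℝ) (hx : ∀ j, x j ∈ Set.Icc A B) :
    ∃ xb ∈ Set.Icc A B, ∃ δ > (0 : ℝ),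
      ∀ y : Fin N → ℝ, (∀ j, y j ∈ Set.Icc A B) → (∀ j, j ≠ i → |y j - x j| < δ) →
        payoff N E i (Function.update y i xb) = 1 := by
  have hn : (2 : ℝ) ≤ N := by exact_mod_cast hN
  have hcard : ((Finset.univ \ {i} : Finset (Fin N)).card : ℝ) = N - 1 := by
    rw [Finset.card_sdiff_of_subset (by simp)]
    simp [Nat.cast_sub (show 1 ≤ N by omega)]
  set S : ℝ := ∑ j ∈ Finset.univ \ {i}, x j with hS
  have hSA : (N - 1) * A ≤ S := by
    have := Finset.card_nsmul_le_sum (Finset.univ \ {i}) x A fun j _ => (hx j).1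
    rwa [nsmul_eq_mul, hcard] at this
  have hSB : S ≤ (N - 1) * B := by
    have := Finset.sum_le_card_nsmul (Finset.univ \ {i}) x B fun j _ => (hx j).2
    rwa [nsmul_eq_mul, hcard] at this
  -- `T` is the bid at which player `i` would bid exactly the reference price.
  obtain ⟨T, hT⟩ : ∃ T : ℝ, (2 * N - 1) * T = S + N * E :=
    ⟨(S + N * E) / (2 * N - 1), mul_div_cancel₀ _ (by linarith)⟩
  have hAT : A < T := by nlinarith
  have hTB : T < B := by nlinarith
  obtain ⟨ε, hε, hAε, hsep⟩ := exists_margin hAT x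
  have hδ : 0 < ε / (4 * N) := by positivity
  obtain ⟨δ, hδdef⟩ : ∃ δ, δ = ε / (4 * N) := ⟨_, rfl⟩
  rw [← hδdef] at hδ
  have hNδ : 4 * (N * δ) = ε := by rw [hδdef]; field_simp
  have hδε : δ < ε := by nlinarith
  refine ⟨T - ε, ⟨by linarith, by linarith⟩, δ, hδ, fun y _ hyx => ?_⟩
  have hd : |(∑ j ∈ Finset.univ \ {i}, y j) - S| ≤ (N - 1) * δ := by
    rw [hS, ← Finset.sum_sub_distrib, ← hcard, ← nsmul_eq_mul]
    refine (Finset.abs_sum_le_sum_abs _ _).trans (Finset.sum_le_card_nsmul _ _ _ fun j hj => ?_)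
    exact (hyx j (by simpa using hj)).le
  obtain ⟨hd1, hd2⟩ := abs_le.mp hd
  have hP : 2 * N * refPrice N E (Function.update y i (T - ε))
      = T - ε + (∑ j ∈ Finset.univ \ {i}, y j) + N * E := by
    rw [refPrice, Finset.sum_update_of_mem (Finset.mem_univ i)]
    field_simp
  set P := refPrice N E (Function.update y i (T - ε)) with hPdef
  have hlow : T - ε ≤ P := by
    have : 2 * N * (T - ε) ≤ 2 * N * P := by nlinarith
    exact le_of_mul_le_mul_left this (by positivity)
  have hhigh : P < T - δ := by
    have : 2 * N * P < 2 * N * (T - δ) := by nlinarith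
    exact lt_of_mul_lt_mul_left this (by positivity)
  refine payoff_eq_one_of_unique (by simpa using hlow) fun j hj => ?_
  obtain ⟨h1, h2⟩ := abs_lt.mp (hyx j hj)
  rw [Function.update_self, Function.update_of_ne hj, ← hPdef]
  by_cases hxT : x j < T
  · left
    linarith [hsep j hxT]
  · right
    linarith [not_lt.mp hxT]
end

section
/- The two-player Moroccan procurement game is not uniformly payoff secure: there exist x ∈ [A,B] and ε > 0 such that for every x̄ ∈ [A,B] there exists y ∈ [A,B] with the property that for every δ > 0 there exists y' ∈ [A,B] with |y' − y| < δ and g(x̄, y') < g(x, y) − ε. -/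
/-!
Measure bids by their signed distance from `E`. A bid `x < E` wins exactly when
`3 (x - E) ≤ y - E < x - E` or `y - E > (x - E) / 3`, and it loses when
`x - E < y - E ≤ (x - E) / 3`, in particular to bids slightly above itself.

Take `x = (A + E) / 2`, so that `3 (x - E) ≤ A - E` and `x` beats every bid in `[A, x)`.
* A deviation `xb ≤ x` fails at `y = xb`: there `x` earns at least `1 / 2`, while `xb` loses
  against bids slightly above itself.
* A deviation `x < xb < E` fails at `y = E + (xb - E) / 3`, which `x` beats but `xb` does not.
* A deviation `xb ≥ E` fails at `y = A`, which `x` beats but `xb` does not.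
-/

open MeasureTheory

theorem g2_eq_one_of_undercut {E x y : ℝ} (h₁ : y < x) (h₂ : 3 * (x - E) ≤ y - E) :
    g2 E x y = 1 := by
  unfold g2 P2
  exact if_pos (Or.inl ⟨h₁, by linarith⟩)

theorem g2_eq_one_of_far_above {E x y : ℝ} (hx : x < E) (h : x - E < 3 * (y - E)) :
    g2 E x y = 1 := by
  unfold g2 P2
  exact if_pos (Or.inr (Or.inr ⟨by linarith, by linarith⟩))

theorem g2_self (E x : ℝ) : 1 / 2 ≤ g2 E x x := by
  unfold g2
  rw [if_pos rfl]
  split_ifs <;> norm_num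

theorem g2_eq_zero_of_just_above {E x y : ℝ} (h₁ : x < y) (h₂ : 3 * (y - E) ≤ x - E) :
    g2 E x y = 0 := by
  unfold g2 P2
  rw [if_neg, if_neg h₁.ne]
  rintro (h | h | h) <;> linarith [h.1, h.2]

theorem g2_eq_zero_of_below {E x y : ℝ} (hx : E ≤ x) (h : y < x) :
    g2 E x y = 0 := by
  unfold g2 P2
  rw [if_neg, if_neg h.ne']
  rintro (h | h | h) <;> linarith [h.1, h.2]

/-- The two-player Moroccan procurement game is not uniformly payoff secure:
some `x ∈ [A,B]` and `ε > 0` admit, for every candidate deviation `x̄ ∈ [A,B]`,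
an opponent bid `y ∈ [A,B]` near which player 1 cannot secure `g(x,y) − ε`. -/
theorem not_uniformly_payoff_secure (A E B : ℝ) (hAE : A < E) (hEB : E < B) :
    ∃ x ∈ Set.Icc A B, ∃ ε > (0 : ℝ),
      ∀ xb ∈ Set.Icc A B, ∃ y ∈ Set.Icc A B,
        ∀ δ > (0 : ℝ), ∃ y' ∈ Set.Icc A B, |y' - y| < δ ∧ g2 E xb y' < g2 E x y - ε := by
  refine ⟨(A + E) / 2, ⟨by linarith, by linarith⟩, 1 / 4, by norm_num, ?_⟩
  rintro xb ⟨hA, hB⟩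
  rcases le_or_gt xb ((A + E) / 2) with hx | hx
  · refine ⟨xb, ⟨hA, hB⟩, fun δ hδ => ?_⟩
    have hg : 1 / 2 ≤ g2 E ((A + E) / 2) xb := by
      rcases hx.lt_or_eq with h | rfl
      · rw [g2_eq_one_of_undercut h (by linarith)]
        norm_num
      · exact g2_self _ _
    have hpos : 0 < min (δ / 2) ((E - xb) / 2) := lt_min (by linarith) (by linarith)
    have hl := min_le_left (δ / 2) ((E - xb) / 2)
    have hr := min_le_right (δ / 2) ((E - xb) / 2)
    refine ⟨xb + min (δ / 2) ((E - xb) / 2), ⟨by linarith, by linarith⟩, ?_, ?_⟩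
    · rw [add_sub_cancel_left, abs_of_pos hpos]
      linarith
    · rw [g2_eq_zero_of_just_above (by linarith) (by linarith)]
      linarith
  · rcases lt_or_ge xb E with hE | hE
    · refine ⟨E + (xb - E) / 3, ⟨by linarith, by linarith⟩, fun δ hδ =>
        ⟨E + (xb - E) / 3, ⟨by linarith, by linarith⟩, by simpa using hδ, ?_⟩⟩
      rw [g2_eq_zero_of_just_above (by linarith) (by linarith),
        g2_eq_one_of_far_above (by linarith) (by linarith)]
      norm_num
    · refine ⟨A, ⟨le_rfl, by linarith⟩, fun δ hδ =>
        ⟨A, ⟨le_rfl, by linarith⟩, by simpa using hδ, ?_⟩⟩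
      rw [g2_eq_zero_of_below hE (by linarith),
        g2_eq_one_of_undercut (by linarith) (by linarith)]
      norm_num
end

section
/- In the three-player Moroccan procurement game, player 1's payoff is piecewise constant in its own bid with at most five jump points determined by the opponents: for fixed y, z ∈ [A,B], the map x ↦ g_1(x, y, z) on [A,B] is continuous (indeed locally constant) at every point x ∈ [A,B] that does not belong to the set {y, z, (y + z + 3E)/5, 5y − 3E − z, 5z − 3E − y}. -/
/-!
The winner set, hence the payoff, depends only on the order type of the bids together with the
truth values of the comparisons `x i ≤ P` (`payoff_congr`). For the profile `(x, y, z)` each of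
these comparisons is either independent of `x` or equivalent to comparing `x` with one of the five
cutpoints. When `x` differs from all five, every comparison keeps its truth value on a
neighbourhood of `x` (`eventually_le_iff`), so the payoff is constant there.
-/

open scoped BigOperators

/-- Payoffs depend only on the comparisons among bids and of bids with the reference price. -/
theorem payoff_congr {N : ℕ} {E : ℝ} {u v : Fin N → ℝ} (i : Fin N)
    (h : ∀ i j, u i ≤ u j ↔ v i ≤ v j)
    (hP : ∀ i, u i ≤ refPrice N E u ↔ v i ≤ refPrice N E v) :
    payoff N E i u = payoff N E i v := by
  have hw : winners N E u = winners N E v := by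
    simp only [winners, h, hP]
  rw [payoff, payoff, hw]

theorem refPrice_three (E x y z : ℝ) :
    refPrice 3 E ![x, y, z] = (x + y + z + 3 * E) / 6 := by
  simp only [refPrice, Fin.sum_univ_three, Matrix.cons_val]
  norm_num

/-- Off the cutpoint `c`, both comparisons with `c` are locally constant. -/
theorem eventually_le_iff {x c : ℝ} (h : x ≠ c) :
    ∀ᶠ x' in nhds x, (x' ≤ c ↔ x ≤ c) ∧ (c ≤ x' ↔ c ≤ x) := by
  rcases lt_or_gt_of_ne h with h | h
  · filter_upwards [eventually_lt_nhds h] with x' hx'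
    constructor <;> constructor <;> intro _ <;> linarith
  · filter_upwards [eventually_gt_nhds h] with x' hx'
    constructor <;> constructor <;> intro _ <;> linarith

/-- In the three-player Moroccan procurement game, for fixed opponent bids `y, z` the
map `x ↦ g₁(x,y,z)` is locally constant (hence continuous) at every
`x ∈ [A,B]` outside the five cutpoints `y`, `z`, `(y+z+3E)/5`, `5y−3E−z`, `5z−3E−y`. -/
theorem three_player_piecewise_constant (A E B : ℝ) (hAE : A < E) (hEB : E < B)
    (y z : ℝ) (hy : y ∈ Set.Icc A B) (hz : z ∈ Set.Icc A B)
    (x : ℝ) (hx : x ∈ Set.Icc A B)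
    (hcut : x ∉ ({y, z, (y + z + 3 * E) / 5, 5 * y - 3 * E - z,
        5 * z - 3 * E - y} : Set ℝ)) :
    (∃ δ > (0 : ℝ), ∀ x' ∈ Set.Icc A B, |x' - x| < δ →
        payoff 3 E 0 ![x', y, z] = payoff 3 E 0 ![x, y, z]) ∧
    ContinuousWithinAt (fun x' => payoff 3 E 0 ![x', y, z]) (Set.Icc A B) x := by
  simp only [Set.mem_insert_iff, Set.mem_singleton_iff, not_or] at hcut
  obtain ⟨h1, h2, h3, h4, h5⟩ := hcut
  have key : ∀ᶠ x' in nhds x, payoff 3 E 0 ![x', y, z] = payoff 3 E 0 ![x, y, z] := by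
    filter_upwards [eventually_le_iff h1, eventually_le_iff h2, eventually_le_iff h3,
      eventually_le_iff h4, eventually_le_iff h5] with w k1 k2 k3 k4 k5
    -- Each comparison with the reference price is a comparison of the own bid with a cutpoint.
    have own (t : ℝ) : t ≤ (t + y + z + 3 * E) / 6 ↔ t ≤ (y + z + 3 * E) / 5 := by
      constructor <;> intro _ <;> linarith
    have opp₁ (t : ℝ) : y ≤ (t + y + z + 3 * E) / 6 ↔ 5 * y - 3 * E - z ≤ t := by
      constructor <;> intro _ <;> linarith
    have opp₂ (t : ℝ) : z ≤ (t + y + z + 3 * E) / 6 ↔ 5 * z - 3 * E - y ≤ t := by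
      constructor <;> intro _ <;> linarith
    apply payoff_congr
    · intro i j
      fin_cases i <;> fin_cases j <;> simp [k1, k2]
    · intro i
      rw [refPrice_three, refPrice_three]
      fin_cases i
      · exact (own w).trans (k3.1.trans (own x).symm)
      · exact (opp₁ w).trans (k4.2.trans (opp₁ x).symm)
      · exact (opp₂ w).trans (k5.2.trans (opp₂ x).symm)
  constructor
  · obtain ⟨δ, hδ, hball⟩ := Metric.eventually_nhds_iff.1 key
    exact ⟨δ, hδ, fun x' _ hx' => hball (by rwa [Real.dist_eq])⟩
  · have hc : ContinuousAt (fun x' => payoff 3 E 0 ![x', y, z]) x :=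
      continuousAt_const.congr (key.mono fun _ h => h.symm)
    exact hc.continuousWithinAt
end

section
/- Suppose a quasi-symmetric compact game (common compact metric strategy space S, bounded Borel payoffs g_i : S^N → ℝ) satisfies diagonal disjoint payoff matching for player i. Then for every ε > 0, every y ∈ S and every Borel probability measure μ on S, there exist a deviation x̃ ∈ S and a compact set K ⊆ S with K ∩ D_i(x̃) = ∅ such that (1) g_i(x,…,x̃_i,…,x) > g_i(x,…,y_i,…,x) − ε for every x ∈ K, and (2) μ(S ∖ K) < ε. -/
/-!
Given the matching sequence `(x^k)` for `y`, let `B k` be the union of `D_i(x^k)` and of the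
set of `x` where `x^k` fails to `ε`-match `y` diagonally. Together the conditions of DDPM imply that every
point of `S` lies in only finitely many `B k`. The sets `B k` are measurable (the set of
continuity points of a real function is a `Gδ`), so `μ (B k) → 0` by dominated convergence, and
some `B k` has measure below `ε`. Outer regularity yields an open `U ⊇ B k` with `μ U < ε`; the
compact set is `K = Uᶜ`.
-/

open MeasureTheory Filter

/-- The diagonal profile `(x, …, y_i, …, x)`: every coordinate equals `x` except the
`i`-th, which equals `y`. -/
def diagProf {S : Type*} {N : ℕ} (i : Fin N) (x y : S) : Fin N → S :=
  Function.update (Function.const (Fin N) x) i y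

/-- `D_i(y)`: the set of `x ∈ S` at which `x' ↦ g (x', …, y_i, …, x')` is
discontinuous. -/
def diagDisc {S : Type*} [TopologicalSpace S] {N : ℕ} (g : (Fin N → S) → ℝ)
    (i : Fin N) (y : S) : Set S :=
  {x : S | ¬ ContinuousAt (fun x' : S => g (diagProf i x' y)) x}

/-- Diagonal disjoint payoff matching (DDPM) for player `i`: every `y ∈ S` admits a
sequence of deviations `(x^k)` whose diagonal payoffs asymptotically dominate those of
`y` and whose discontinuity sets vanish in the limit superior. -/
def DDPM {S : Type*} [TopologicalSpace S] {N : ℕ} (g : (Fin N → S) → ℝ)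
    (i : Fin N) : Prop :=
  ∀ y : S, ∃ xs : ℕ → S,
    (∀ x : S, g (diagProf i x y) ≤ liminf (fun k => g (diagProf i x (xs k))) atTop) ∧
    (⋂ m : ℕ, ⋃ k, ⋃ (_ : m ≤ k), diagDisc g i (xs k)) = ∅

/-- The key lemma: under DDPM for player `i`, for every `ε > 0`, `y ∈ S` and Borel
probability measure `μ` on `S` there are a deviation `x̃` and a compact set
`K ⊆ S \ D_i(x̃)` on which `x̃` `ε`-improves upon `y` diagonally, with
`μ(S ∖ K) < ε`. -/
theorem ddpm_compact_matching {S : Type*} [MetricSpace S] [CompactSpace S] [Nonempty S]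
    [MeasurableSpace S] [BorelSpace S]
    {N : ℕ} (hN : 1 ≤ N) (g : Fin N → (Fin N → S) → ℝ)
    (hmeas : ∀ i, Measurable (g i)) (hbdd : ∃ M : ℝ, ∀ i x, |g i x| ≤ M)
    (i : Fin N) (hddpm : DDPM (g i) i) :
    ∀ ε > (0 : ℝ), ∀ y : S, ∀ μ : Measure S, IsProbabilityMeasure μ →
      ∃ xt : S, ∃ K : Set S, IsCompact K ∧ K ∩ diagDisc (g i) i xt = ∅ ∧
        (∀ x ∈ K, g i (diagProf i x y) - ε < g i (diagProf i x xt)) ∧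
        μ Kᶜ < ENNReal.ofReal ε := by
  intro ε hε y μ hμ
  obtain ⟨M, hM⟩ := hbdd
  obtain ⟨xs, hlim, hdisc⟩ := hddpm y
  have hprof : ∀ z : S, Measurable fun x : S => g i (diagProf i x z) := by
    intro z
    refine (hmeas i).comp (measurable_pi_lambda _ fun j => ?_)
    by_cases hj : j = i
    · subst hj
      simp [diagProf]
    · simpa [diagProf, hj] using measurable_id'
  set B : ℕ → Set S := fun k => diagDisc (g i) i (xs k) ∪
    {x | g i (diagProf i x (xs k)) ≤ g i (diagProf i x y) - ε} with hB
  have hBmeas : ∀ k, MeasurableSet (B k) := fun k =>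
    (IsGδ.setOfPred_continuousAt fun x => g i (diagProf i x (xs k))).measurableSet.compl.union
      (measurableSet_le (hprof _) ((hprof _).sub_const ε))
  have hBev : ∀ x, ∀ᶠ k in atTop, x ∉ B k := by
    intro x
    have h1 : ∀ᶠ k in atTop, x ∉ diagDisc (g i) i (xs k) := by
      have hx : x ∉ ⋂ m : ℕ, ⋃ k, ⋃ (_ : m ≤ k), diagDisc (g i) i (xs k) := by
        simp [hdisc]
      simp only [Set.mem_iInter, Set.mem_iUnion, not_forall, not_exists] at hx
      obtain ⟨m, hm⟩ := hx
      exact eventually_atTop.2 ⟨m, fun k hk => hm k hk⟩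
    -- boundedness of the payoffs rules out a junk value of the real `liminf`
    have hbd : IsBoundedUnder (· ≥ ·) atTop fun k => g i (diagProf i x (xs k)) :=
      isBoundedUnder_of ⟨-M, fun k => (abs_le.1 (hM i _)).1⟩
    have h2 : ∀ᶠ k in atTop, g i (diagProf i x y) - ε < g i (diagProf i x (xs k)) :=
      eventually_lt_of_lt_liminf ((sub_lt_self _ hε).trans_le (hlim x)) hbd
    filter_upwards [h1, h2] with k hk1 hk2 hk
    exact hk.elim hk1 (not_le.2 hk2)
  have htend : Tendsto (fun k => μ (B k)) atTop (nhds (μ ∅)) :=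
    tendsto_measure_of_tendsto_indicator_of_isFiniteMeasure atTop μ hBmeas fun x => by
      filter_upwards [hBev x] with k hk
      simpa using hk
  rw [measure_empty] at htend
  obtain ⟨k, hk⟩ := (htend.eventually_lt_const (ENNReal.ofReal_pos.2 hε)).exists
  obtain ⟨U, hBU, hU, hμU⟩ := (B k).exists_isOpen_lt_of_lt _ hk
  refine ⟨xs k, Uᶜ, hU.isClosed_compl.isCompact, ?_, fun x hx => ?_, by rwa [compl_compl]⟩
  · exact Set.eq_empty_of_forall_notMem fun x hx => hx.1 (hBU (Or.inl hx.2))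
  · exact not_le.1 fun h => hx (hBU (Or.inr h))
end
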